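/- arXiv:1507.07498 — 3 statements merged into one kernel-verified Lean document; each statement's English description precedes it below -/
import Mathlib

section
/- For all k = (k1,k2,k3,k4) and m = (m1,m2,m3,m4) with nonnegative integer entries, Σ(k+m) = Σ(k) + Σ(m), where the right-hand side is the Minkowski sum {p + p' : p ∈ Σ(k), p' ∈ Σ(m)} inside ℤ^12. (This is Theorem 1 of the paper: Σ^f(λ+μ) = Σ^f(λ) + Σ^f(μ) for dominant weights λ, μ of the Lie algebra of type D4.) -/
open Pointwise

/-- The 70 linear inequalities defining Σ(k). -/
def SatisfiesIneqs (k : Fin 4 → ℤ) (p : Fin 12 → ℤ) : Prop :=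
  p 11 ≤ k 0 ∧
  p 10 ≤ k 1 ∧
  p 8 ≤ k 2 ∧
  p 3 ≤ k 3 ∧
  p 6 + p 10 + p 11 ≤ k 0 + k 1 ∧
  p 6 + p 7 + p 8 + p 9 + p 11 ≤ k 0 + k 1 + k 2 ∧
  p 6 + p 8 + p 9 + p 10 + p 11 ≤ k 0 + k 1 + k 2 ∧
  p 8 + p 9 + p 10 ≤ k 1 + k 2 ∧
  p 3 + p 4 + p 5 + p 6 + p 11 ≤ k 0 + k 1 + k 3 ∧
  p 3 + p 4 + p 6 + p 10 + p 11 ≤ k 0 + k 1 + k 3 ∧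
  p 3 + p 4 + p 10 ≤ k 1 + k 3 ∧
  p 1 + p 3 + p 4 + p 8 + p 9 ≤ k 1 + k 2 + k 3 ∧
  p 3 + p 4 + p 8 + p 9 + p 10 ≤ k 1 + k 2 + k 3 ∧
  p 2 + p 3 + p 4 + p 5 + p 6 + p 8 + p 11 ≤ k 0 + k 1 + k 2 + k 3 ∧
  p 1 + p 2 + p 3 + p 4 + p 6 + p 8 + p 11 ≤ k 0 + k 1 + k 2 + k 3 ∧
  p 1 + p 2 + p 3 + p 6 + p 7 + p 8 + p 11 ≤ k 0 + k 1 + k 2 + k 3 ∧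
  p 1 + p 3 + p 6 + p 7 + p 8 + p 9 + p 11 ≤ k 0 + k 1 + k 2 + k 3 ∧
  p 3 + p 4 + p 6 + p 8 + p 9 + p 10 + p 11 ≤ k 0 + k 1 + k 2 + k 3 ∧
  p 1 + p 3 + p 4 + p 6 + p 8 + p 9 + p 11 ≤ k 0 + k 1 + k 2 + k 3 ∧
  p 0 + p 2 + p 3 + p 4 + p 5 + p 6 + p 7 + p 8 + p 10 ≤ k 0 + 2 * k 1 + k 2 + k 3 ∧
  p 0 + p 1 + p 2 + p 3 + p 4 + p 6 + p 7 + p 8 + p 10 ≤ k 0 + 2 * k 1 + k 2 + k 3 ∧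
  p 2 + p 3 + p 4 + p 5 + p 6 + p 7 + p 8 + p 10 + p 11 ≤ k 0 + 2 * k 1 + k 2 + k 3 ∧
  p 1 + p 2 + p 3 + p 4 + p 6 + p 7 + p 8 + p 10 + p 11 ≤ k 0 + 2 * k 1 + k 2 + k 3 ∧
  p 0 + p 1 + p 3 + p 4 + p 6 + p 7 + p 8 + p 9 + p 10 ≤ k 0 + 2 * k 1 + k 2 + k 3 ∧
  p 1 + p 3 + p 4 + p 6 + p 7 + p 8 + p 9 + p 10 + p 11 ≤ k 0 + 2 * k 1 + k 2 + k 3 ∧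
  p 0 + p 3 + p 4 + p 5 + p 6 + p 7 + p 8 + p 9 + p 10 ≤ k 0 + 2 * k 1 + k 2 + k 3 ∧
  p 3 + p 4 + p 5 + p 6 + p 7 + p 8 + p 9 + p 10 + p 11 ≤ k 0 + 2 * k 1 + k 2 + k 3 ∧
  p 1 + p 2 + p 3 + p 4 + p 6 + p 7 + 2 * p 8 + p 9 + p 10 + p 11 ≤ k 0 + 2 * k 1 + 2 * k 2 + k 3 ∧
  p 2 + p 3 + p 4 + p 5 + p 6 + p 7 + 2 * p 8 + p 9 + p 10 + p 11 ≤ k 0 + 2 * k 1 + 2 * k 2 + k 3 ∧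
  p 0 + p 1 + p 2 + p 3 + p 4 + p 6 + p 7 + 2 * p 8 + p 9 + p 10 ≤ k 0 + 2 * k 1 + 2 * k 2 + k 3 ∧
  p 0 + p 2 + p 3 + p 4 + p 5 + p 6 + p 7 + 2 * p 8 + p 9 + p 10 ≤ k 0 + 2 * k 1 + 2 * k 2 + k 3 ∧
  p 1 + p 3 + p 4 + p 6 + p 7 + 2 * p 8 + 2 * p 9 + p 10 + p 11 ≤ k 0 + 2 * k 1 + 2 * k 2 + k 3 ∧
  p 1 + p 2 + 2 * p 3 + p 4 + p 5 + p 6 + p 7 + p 8 + p 10 + p 11 ≤ k 0 + 2 * k 1 + k 2 + 2 * k 3 ∧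
  p 1 + 2 * p 3 + p 4 + p 5 + p 6 + p 7 + p 8 + p 9 + p 10 + p 11 ≤ k 0 + 2 * k 1 + k 2 + 2 * k 3 ∧
  p 0 + p 1 + p 2 + 2 * p 3 + p 4 + p 5 + p 6 + p 7 + p 8 + p 10 ≤ k 0 + 2 * k 1 + k 2 + 2 * k 3 ∧
  p 0 + p 1 + 2 * p 3 + p 4 + p 5 + p 6 + p 7 + p 8 + p 9 + p 10 ≤ k 0 + 2 * k 1 + k 2 + 2 * k 3 ∧
  p 1 + p 2 + 2 * p 3 + 2 * p 4 + p 5 + p 6 + p 8 + p 10 + p 11 ≤ k 0 + 2 * k 1 + k 2 + 2 * k 3 ∧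
  p 1 + 2 * p 3 + 2 * p 4 + p 5 + p 6 + p 8 + p 9 + p 10 + p 11 ≤ k 0 + 2 * k 1 + k 2 + 2 * k 3 ∧
  p 2 + p 3 + p 4 + p 5 + 2 * p 6 + p 7 + p 8 + p 10 + 2 * p 11 ≤ 2 * k 0 + 2 * k 1 + k 2 + k 3 ∧
  p 3 + p 4 + p 5 + 2 * p 6 + p 7 + p 8 + p 9 + p 10 + 2 * p 11 ≤ 2 * k 0 + 2 * k 1 + k 2 + k 3 ∧
  p 1 + p 2 + p 3 + p 4 + 2 * p 6 + p 7 + p 8 + p 10 + 2 * p 11 ≤ 2 * k 0 + 2 * k 1 + k 2 + k 3 ∧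
  p 1 + p 3 + p 4 + 2 * p 6 + p 7 + p 8 + p 9 + p 10 + 2 * p 11 ≤ 2 * k 0 + 2 * k 1 + k 2 + k 3 ∧
  p 0 + p 1 + p 2 + 2 * p 3 + p 4 + p 5 + p 6 + p 7 + 2 * p 8 + p 9 + p 10 ≤ k 0 + 2 * k 1 + 2 * k 2 + 2 * k 3 ∧
  p 1 + p 2 + 2 * p 3 + p 4 + p 5 + p 6 + p 7 + 2 * p 8 + p 9 + p 10 + p 11 ≤ k 0 + 2 * k 1 + 2 * k 2 + 2 * k 3 ∧
  p 1 + p 2 + 2 * p 3 + 2 * p 4 + p 5 + p 6 + 2 * p 8 + p 9 + p 10 + p 11 ≤ k 0 + 2 * k 1 + 2 * k 2 + 2 * k 3 ∧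
  p 1 + p 2 + 2 * p 3 + p 4 + p 5 + 2 * p 6 + p 7 + p 8 + p 10 + 2 * p 11 ≤ 2 * k 0 + 2 * k 1 + k 2 + 2 * k 3 ∧
  p 1 + 2 * p 3 + p 4 + p 5 + 2 * p 6 + p 7 + p 8 + p 9 + p 10 + 2 * p 11 ≤ 2 * k 0 + 2 * k 1 + k 2 + 2 * k 3 ∧
  p 1 + p 2 + 2 * p 3 + 2 * p 4 + p 5 + 2 * p 6 + p 8 + p 10 + 2 * p 11 ≤ 2 * k 0 + 2 * k 1 + k 2 + 2 * k 3 ∧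
  p 1 + 2 * p 3 + 2 * p 4 + p 5 + 2 * p 6 + p 8 + p 9 + p 10 + 2 * p 11 ≤ 2 * k 0 + 2 * k 1 + k 2 + 2 * k 3 ∧
  p 1 + p 2 + p 3 + p 4 + 2 * p 6 + p 7 + 2 * p 8 + p 9 + p 10 + 2 * p 11 ≤ 2 * k 0 + 2 * k 1 + 2 * k 2 + k 3 ∧
  p 2 + p 3 + p 4 + p 5 + 2 * p 6 + p 7 + 2 * p 8 + p 9 + p 10 + 2 * p 11 ≤ 2 * k 0 + 2 * k 1 + 2 * k 2 + k 3 ∧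
  p 1 + p 3 + p 4 + 2 * p 6 + p 7 + 2 * p 8 + 2 * p 9 + p 10 + 2 * p 11 ≤ 2 * k 0 + 2 * k 1 + 2 * k 2 + k 3 ∧
  p 1 + p 2 + 2 * p 3 + p 4 + p 5 + 2 * p 6 + p 7 + 2 * p 8 + p 9 + p 10 + 2 * p 11 ≤ 2 * k 0 + 2 * k 1 + 2 * k 2 + 2 * k 3 ∧
  p 1 + p 2 + 2 * p 3 + 2 * p 4 + p 5 + 2 * p 6 + 2 * p 8 + p 9 + p 10 + 2 * p 11 ≤ 2 * k 0 + 2 * k 1 + 2 * k 2 + 2 * k 3 ∧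
  p 1 + p 2 + 2 * p 3 + 2 * p 4 + p 5 + p 6 + p 7 + p 8 + 2 * p 10 + p 11 ≤ k 0 + 3 * k 1 + k 2 + 2 * k 3 ∧
  p 1 + 2 * p 3 + 2 * p 4 + p 5 + p 6 + p 7 + p 8 + p 9 + 2 * p 10 + p 11 ≤ k 0 + 3 * k 1 + k 2 + 2 * k 3 ∧
  p 0 + p 1 + p 2 + 2 * p 3 + 2 * p 4 + p 5 + p 6 + p 7 + p 8 + 2 * p 10 ≤ k 0 + 3 * k 1 + k 2 + 2 * k 3 ∧
  p 0 + p 1 + 2 * p 3 + 2 * p 4 + p 5 + p 6 + p 7 + p 8 + p 9 + 2 * p 10 ≤ k 0 + 3 * k 1 + k 2 + 2 * k 3 ∧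
  p 0 + p 1 + 2 * p 3 + 2 * p 4 + p 5 + p 6 + p 7 + 2 * p 8 + 2 * p 9 + 2 * p 10 ≤ k 0 + 3 * k 1 + 2 * k 2 + 2 * k 3 ∧
  p 1 + 2 * p 3 + 2 * p 4 + p 5 + p 6 + p 7 + 2 * p 8 + 2 * p 9 + 2 * p 10 + p 11 ≤ k 0 + 3 * k 1 + 2 * k 2 + 2 * k 3 ∧
  p 0 + p 1 + 2 * p 3 + 2 * p 4 + p 5 + 2 * p 6 + p 7 + p 8 + p 9 + 2 * p 10 + p 11 ≤ 2 * k 0 + 3 * k 1 + k 2 + 2 * k 3 ∧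
  p 0 + p 1 + p 2 + 2 * p 3 + 2 * p 4 + p 5 + 2 * p 6 + p 7 + p 8 + 2 * p 10 + p 11 ≤ 2 * k 0 + 3 * k 1 + k 2 + 2 * k 3 ∧
  p 0 + p 1 + 2 * p 3 + 2 * p 4 + p 5 + 2 * p 6 + p 7 + 2 * p 8 + 2 * p 9 + 2 * p 10 + p 11 ≤ 2 * k 0 + 3 * k 1 + 2 * k 2 + 2 * k 3 ∧
  p 1 + p 2 + 2 * p 3 + 2 * p 4 + p 5 + p 6 + p 7 + 3 * p 8 + 2 * p 9 + 2 * p 10 + p 11 ≤ k 0 + 3 * k 1 + 3 * k 2 + 2 * k 3 ∧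
  p 0 + p 1 + p 2 + 2 * p 3 + 2 * p 4 + p 5 + p 6 + p 7 + 3 * p 8 + 2 * p 9 + 2 * p 10 ≤ k 0 + 3 * k 1 + 3 * k 2 + 2 * k 3 ∧
  p 1 + p 2 + 2 * p 3 + 2 * p 4 + p 5 + 3 * p 6 + p 7 + p 8 + 2 * p 10 + 3 * p 11 ≤ 3 * k 0 + 3 * k 1 + k 2 + 2 * k 3 ∧
  p 1 + 2 * p 3 + 2 * p 4 + p 5 + 3 * p 6 + p 7 + p 8 + p 9 + 2 * p 10 + 3 * p 11 ≤ 3 * k 0 + 3 * k 1 + k 2 + 2 * k 3 ∧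
  p 1 + p 2 + 2 * p 3 + 2 * p 4 + p 5 + 3 * p 6 + p 7 + 3 * p 8 + 2 * p 9 + 2 * p 10 + 3 * p 11 ≤ 3 * k 0 + 3 * k 1 + 3 * k 2 + 2 * k 3 ∧
  p 0 + p 1 + p 2 + 2 * p 3 + 2 * p 4 + p 5 + 2 * p 6 + p 7 + 3 * p 8 + 2 * p 9 + 2 * p 10 + p 11 ≤ 2 * k 0 + 3 * k 1 + 3 * k 2 + 2 * k 3 ∧
  p 1 + 2 * p 3 + 2 * p 4 + p 5 + 3 * p 6 + p 7 + 2 * p 8 + 2 * p 9 + 2 * p 10 + 3 * p 11 ≤ 3 * k 0 + 3 * k 1 + 2 * k 2 + 2 * k 3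

/-- Σ(k): the set of 12-tuples of nonnegative integers satisfying the 70 inequalities. -/
def SigmaSet (k : Fin 4 → ℤ) : Set (Fin 12 → ℤ) :=
  {p | (∀ j, 0 ≤ p j) ∧ SatisfiesIneqs k p}

/-!
Write `ω₁, …, ω₄` for `single 0 1, …, single 3 1`. Every nonzero `0 ≤ k` has some `ω = ωᵢ ≤ k` such
that each point of `SigmaSet k` splits as a point of `SigmaSet (k - ω)` plus a point of
`SigmaSet ω`. Iterating this along `k + m`, and handing each `ω` to whichever of `k` and `m` can
still absorb it, yields `SigmaSet (k + m) ⊆ SigmaSet k + SigmaSet m`; the other inclusion holds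
because the inequalities are linear in `(k, p)` jointly.

Passing from `k` to `k - ω` lowers the right-hand sides, so the summand in `SigmaSet ω` has to
reduce the left-hand side of every inequality that is tight, or nearly so, at `p`. It is found
greedily: a test `bound ≤ row` in `greedy₁, …, greedy₄` asks whether an inequality `row ≤ bound` of
`SigmaSet k` is tight, with the coordinates already known to vanish dropped from the row. The
directions are peeled in the order `ω₄`, `ω₃`, `ω₁`, `ω₂`, so that all but the first are peeled on a
face of the cone `0 ≤ k`, where most of the seventy inequalities are redundant.
-/

open Pi (single)

variable {k m : Fin 4 → ℤ} {p q : Fin 12 → ℤ}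

theorem SatisfiesIneqs.add (hp : SatisfiesIneqs k p) (hq : SatisfiesIneqs m q) :
    SatisfiesIneqs (k + m) (p + q) := by
  simp only [SatisfiesIneqs, Pi.add_apply] at hp hq ⊢
  repeat
    refine ⟨by linarith only [hp.1, hq.1], ?_⟩
    replace hp := hp.2
    replace hq := hq.2
  linarith only [hp, hq]

theorem sigmaSet_add_subset (k m : Fin 4 → ℤ) :
    SigmaSet k + SigmaSet m ⊆ SigmaSet (k + m) := by
  rintro _ ⟨p, hp, q, hq, rfl⟩
  exact ⟨fun j => add_nonneg (hp.1 j) (hq.1 j), hp.2.add hq.2⟩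

theorem zero_mem_sigmaSet_zero : (0 : Fin 12 → ℤ) ∈ SigmaSet 0 := by
  simp [SigmaSet, SatisfiesIneqs]

theorem mem_sigmaSet_iff : p ∈ SigmaSet k ↔
    (0 ≤ p 0 ∧ 0 ≤ p 1 ∧ 0 ≤ p 2 ∧ 0 ≤ p 3 ∧ 0 ≤ p 4 ∧ 0 ≤ p 5 ∧ 0 ≤ p 6 ∧ 0 ≤ p 7 ∧ 0 ≤ p 8 ∧
      0 ≤ p 9 ∧ 0 ≤ p 10 ∧ 0 ≤ p 11) ∧ SatisfiesIneqs k p := by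
  simp [SigmaSet, Fin.forall_fin_succ]

theorem mem_sigmaSet_iff_of_apply_three (h3 : k 3 = 0) :
    p ∈ SigmaSet k ↔
      (0 ≤ p 0 ∧ 0 ≤ p 1 ∧ 0 ≤ p 2 ∧ 0 ≤ p 4 ∧ 0 ≤ p 5 ∧ 0 ≤ p 6 ∧ 0 ≤ p 7 ∧ 0 ≤ p 8 ∧ 0 ≤ p 9 ∧
        0 ≤ p 10 ∧ 0 ≤ p 11) ∧
      p 3 = 0 ∧
      p 11 ≤ k 0 ∧
      p 8 ≤ k 2 ∧
      p 4 + p 5 + p 6 + p 11 ≤ k 0 + k 1 ∧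
      p 4 + p 6 + p 10 + p 11 ≤ k 0 + k 1 ∧
      p 4 + p 10 ≤ k 1 ∧
      p 1 + p 4 + p 8 + p 9 ≤ k 1 + k 2 ∧
      p 4 + p 8 + p 9 + p 10 ≤ k 1 + k 2 ∧
      p 2 + p 4 + p 5 + p 6 + p 8 + p 11 ≤ k 0 + k 1 + k 2 ∧
      p 1 + p 2 + p 4 + p 6 + p 8 + p 11 ≤ k 0 + k 1 + k 2 ∧
      p 1 + p 2 + p 6 + p 7 + p 8 + p 11 ≤ k 0 + k 1 + k 2 ∧
      p 1 + p 6 + p 7 + p 8 + p 9 + p 11 ≤ k 0 + k 1 + k 2 ∧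
      p 4 + p 6 + p 8 + p 9 + p 10 + p 11 ≤ k 0 + k 1 + k 2 ∧
      p 1 + p 4 + p 6 + p 8 + p 9 + p 11 ≤ k 0 + k 1 + k 2 ∧
      p 1 + p 2 + p 4 + p 5 + p 6 + p 7 + p 8 + p 10 + p 11 ≤ k 0 + 2 * k 1 + k 2 ∧
      p 1 + p 4 + p 5 + p 6 + p 7 + p 8 + p 9 + p 10 + p 11 ≤ k 0 + 2 * k 1 + k 2 ∧
      p 0 + p 1 + p 2 + p 4 + p 5 + p 6 + p 7 + p 8 + p 10 ≤ k 0 + 2 * k 1 + k 2 ∧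
      p 0 + p 1 + p 4 + p 5 + p 6 + p 7 + p 8 + p 9 + p 10 ≤ k 0 + 2 * k 1 + k 2 ∧
      p 1 + p 2 + 2 * p 4 + p 5 + p 6 + p 8 + p 10 + p 11 ≤ k 0 + 2 * k 1 + k 2 ∧
      p 1 + 2 * p 4 + p 5 + p 6 + p 8 + p 9 + p 10 + p 11 ≤ k 0 + 2 * k 1 + k 2 ∧
      p 0 + p 1 + p 2 + p 4 + p 5 + p 6 + p 7 + 2 * p 8 + p 9 + p 10 ≤ k 0 + 2 * k 1 + 2 * k 2 ∧
      p 1 + p 2 + p 4 + p 5 + p 6 + p 7 + 2 * p 8 + p 9 + p 10 + p 11 ≤ k 0 + 2 * k 1 + 2 * k 2 ∧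
      p 1 + p 2 + 2 * p 4 + p 5 + p 6 + 2 * p 8 + p 9 + p 10 + p 11 ≤ k 0 + 2 * k 1 + 2 * k 2 ∧
      p 1 + p 2 + p 4 + p 5 + 2 * p 6 + p 7 + p 8 + p 10 + 2 * p 11 ≤ 2 * k 0 + 2 * k 1 + k 2 ∧
      p 1 + p 4 + p 5 + 2 * p 6 + p 7 + p 8 + p 9 + p 10 + 2 * p 11 ≤ 2 * k 0 + 2 * k 1 + k 2 ∧
      p 1 + p 2 + 2 * p 4 + p 5 + 2 * p 6 + p 8 + p 10 + 2 * p 11 ≤ 2 * k 0 + 2 * k 1 + k 2 ∧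
      p 1 + 2 * p 4 + p 5 + 2 * p 6 + p 8 + p 9 + p 10 + 2 * p 11 ≤ 2 * k 0 + 2 * k 1 + k 2 ∧
      p 1 + p 2 + p 4 + p 5 + 2 * p 6 + p 7 + 2 * p 8 + p 9 + p 10 + 2 * p 11 ≤
        2 * k 0 + 2 * k 1 + 2 * k 2 ∧
      p 1 + p 2 + 2 * p 4 + p 5 + 2 * p 6 + 2 * p 8 + p 9 + p 10 + 2 * p 11 ≤
        2 * k 0 + 2 * k 1 + 2 * k 2 := by
  rw [mem_sigmaSet_iff, SatisfiesIneqs]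
  grind (splits := 200)

theorem mem_sigmaSet_iff_of_apply_two_three (h2 : k 2 = 0) (h3 : k 3 = 0) :
    p ∈ SigmaSet k ↔
      (0 ≤ p 0 ∧ 0 ≤ p 1 ∧ 0 ≤ p 2 ∧ 0 ≤ p 4 ∧ 0 ≤ p 5 ∧ 0 ≤ p 6 ∧ 0 ≤ p 7 ∧ 0 ≤ p 9 ∧ 0 ≤ p 10 ∧
        0 ≤ p 11) ∧
      (p 3 = 0 ∧ p 8 = 0) ∧
      p 11 ≤ k 0 ∧
      p 1 + p 4 + p 9 ≤ k 1 ∧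
      p 4 + p 9 + p 10 ≤ k 1 ∧
      p 2 + p 4 + p 5 + p 6 + p 11 ≤ k 0 + k 1 ∧
      p 1 + p 2 + p 4 + p 6 + p 11 ≤ k 0 + k 1 ∧
      p 1 + p 2 + p 6 + p 7 + p 11 ≤ k 0 + k 1 ∧
      p 1 + p 6 + p 7 + p 9 + p 11 ≤ k 0 + k 1 ∧
      p 4 + p 6 + p 9 + p 10 + p 11 ≤ k 0 + k 1 ∧
      p 1 + p 4 + p 6 + p 9 + p 11 ≤ k 0 + k 1 ∧
      p 0 + p 1 + p 2 + p 4 + p 5 + p 6 + p 7 + p 9 + p 10 ≤ k 0 + 2 * k 1 ∧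
      p 1 + p 2 + p 4 + p 5 + p 6 + p 7 + p 9 + p 10 + p 11 ≤ k 0 + 2 * k 1 ∧
      p 1 + p 2 + 2 * p 4 + p 5 + p 6 + p 9 + p 10 + p 11 ≤ k 0 + 2 * k 1 ∧
      p 1 + p 2 + p 4 + p 5 + 2 * p 6 + p 7 + p 9 + p 10 + 2 * p 11 ≤ 2 * k 0 + 2 * k 1 ∧
      p 1 + p 2 + 2 * p 4 + p 5 + 2 * p 6 + p 9 + p 10 + 2 * p 11 ≤ 2 * k 0 + 2 * k 1 := by
  rw [mem_sigmaSet_iff_of_apply_three h3]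
  grind (splits := 200)

theorem mem_sigmaSet_iff_of_apply_zero_two_three (h0 : k 0 = 0) (h2 : k 2 = 0) (h3 : k 3 = 0) :
    p ∈ SigmaSet k ↔
      (0 ≤ p 0 ∧ 0 ≤ p 1 ∧ 0 ≤ p 2 ∧ 0 ≤ p 4 ∧ 0 ≤ p 5 ∧ 0 ≤ p 6 ∧ 0 ≤ p 7 ∧ 0 ≤ p 9 ∧ 0 ≤ p 10) ∧
      (p 3 = 0 ∧ p 8 = 0 ∧ p 11 = 0) ∧
      p 2 + p 4 + p 5 + p 6 ≤ k 1 ∧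
      p 1 + p 2 + p 4 + p 6 ≤ k 1 ∧
      p 1 + p 2 + p 6 + p 7 ≤ k 1 ∧
      p 1 + p 6 + p 7 + p 9 ≤ k 1 ∧
      p 4 + p 6 + p 9 + p 10 ≤ k 1 ∧
      p 1 + p 4 + p 6 + p 9 ≤ k 1 ∧
      p 0 + p 1 + p 2 + p 4 + p 5 + p 6 + p 7 + p 9 + p 10 ≤ 2 * k 1 ∧
      p 1 + p 2 + p 4 + p 5 + 2 * p 6 + p 7 + p 9 + p 10 ≤ 2 * k 1 ∧
      p 1 + p 2 + 2 * p 4 + p 5 + 2 * p 6 + p 9 + p 10 ≤ 2 * k 1 := by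
  rw [mem_sigmaSet_iff_of_apply_two_three h2 h3]
  grind (splits := 200)

/-- The unit vector at the first index of the list where `p` is positive, and `0` if there is none;
the greedy choices below take a unit of `p` from such a list of candidate coordinates. -/
def singleFirstPos (p : Fin 12 → ℤ) : List (Fin 12) → Fin 12 → ℤ
  | [] => 0
  | j :: l => if 0 < p j then single j 1 else singleFirstPos p l

/-- The part of `p` split off in direction `ω₄`: an element of `SigmaSet (single 3 1)`, chosen so
that subtracting it from `p ∈ SigmaSet k` lands in `SigmaSet (k - single 3 1)`. -/
def greedy₄ (k : Fin 4 → ℤ) (p : Fin 12 → ℤ) : Fin 12 → ℤ :=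
  if 0 < p 3 then single 3 1
  else if k 1 + k 3 ≤ p 4 + p 10 ∨
      k 0 + k 1 + k 3 ≤ p 4 + p 6 + p 10 + p 11 ∨
      k 1 + k 2 + k 3 ≤ p 4 + p 8 + p 9 + p 10 ∨
      k 0 + k 1 + k 2 + k 3 ≤ p 4 + p 6 + p 8 + p 9 + p 10 + p 11 then single 4 1
  else if 0 < p 1 then single 1 1 + singleFirstPos p [5]
  else if k 0 + k 1 + k 2 + k 3 ≤ p 2 + p 6 + p 7 + p 8 + p 11 then single 2 1
  else singleFirstPos p [4, 5, 0]

theorem greedy₄_mem_sigmaSet (k : Fin 4 → ℤ) (p : Fin 12 → ℤ) :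
    greedy₄ k p ∈ SigmaSet (single 3 1) := by
  rw [greedy₄]
  split_ifs <;> (try simp only [singleFirstPos]) <;> (try split_ifs) <;>
    simp [mem_sigmaSet_iff, SatisfiesIneqs]

set_option maxHeartbeats 1000000 in
-- seventy inequalities for each of the nine cases of `greedy₄`
theorem sub_greedy₄_mem_sigmaSet (h3 : 1 ≤ k 3) (hp : p ∈ SigmaSet k) :
    p - greedy₄ k p ∈ SigmaSet (k - single 3 1) := by
  -- Opaque, so that the inequalities are normalized once and not in each case of the choice.
  generalize hq : greedy₄ k p = q
  rw [mem_sigmaSet_iff] at hp ⊢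
  simp only [SatisfiesIneqs, Pi.sub_apply, Pi.single_apply, Fin.reduceEq, if_true, if_false] at hp ⊢
  rw [greedy₄] at hq
  split_ifs at hq <;> (try simp only [singleFirstPos] at hq) <;> (try split_ifs at hq) <;>
    subst hq <;>
    simp only [Pi.add_apply, Pi.zero_apply, Pi.single_apply, Fin.reduceEq, if_true, if_false] <;>
    grind (splits := 100)

/-- The part of `p` split off in direction `ω₃`: an element of `SigmaSet (single 2 1)`, chosen so
that subtracting it from `p ∈ SigmaSet k` with `k 3 = 0` lands in `SigmaSet (k - single 2 1)`. -/
def greedy₃ (k : Fin 4 → ℤ) (p : Fin 12 → ℤ) : Fin 12 → ℤ :=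
  if 0 < p 8 then single 8 1
  else if 0 < p 9 then single 9 1 + singleFirstPos p [2]
  else if k 0 + k 1 + k 2 ≤ p 2 + p 4 + p 5 + p 6 + p 8 + p 11 then single 2 1
  else singleFirstPos p [1, 7, 0]

theorem greedy₃_mem_sigmaSet (k : Fin 4 → ℤ) (p : Fin 12 → ℤ) :
    greedy₃ k p ∈ SigmaSet (single 2 1) := by
  rw [greedy₃]
  split_ifs <;> (try simp only [singleFirstPos]) <;> (try split_ifs) <;>
    simp [mem_sigmaSet_iff_of_apply_three]

theorem sub_greedy₃_mem_sigmaSet (h2 : 1 ≤ k 2) (h3 : k 3 = 0) (hp : p ∈ SigmaSet k) :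
    p - greedy₃ k p ∈ SigmaSet (k - single 2 1) := by
  generalize hq : greedy₃ k p = q
  rw [mem_sigmaSet_iff_of_apply_three (by simpa)] at hp ⊢
  simp only [Pi.sub_apply, Pi.single_apply, Fin.reduceEq, if_true, if_false] at hp ⊢
  rw [greedy₃] at hq
  split_ifs at hq <;> (try simp only [singleFirstPos] at hq) <;> (try split_ifs at hq) <;>
    subst hq <;>
    simp only [Pi.add_apply, Pi.zero_apply, Pi.single_apply, Fin.reduceEq, if_true, if_false] <;>
    grind (splits := 100)

/-- The part of `p` split off in direction `ω₁`: an element of `SigmaSet (single 0 1)`, chosen so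
that subtracting it from `p ∈ SigmaSet k` with `k 2 = k 3 = 0` lands in
`SigmaSet (k - single 0 1)`. -/
def greedy₁ (k : Fin 4 → ℤ) (p : Fin 12 → ℤ) : Fin 12 → ℤ :=
  if 0 < p 11 then single 11 1 + singleFirstPos p [0]
  else if 0 < p 6 then single 6 1
  else if k 0 + k 1 ≤ p 1 + p 2 + p 4 + p 6 + p 11 then single 2 1
  else if k 0 + k 1 ≤ p 4 + p 5 + p 6 + p 11 ∨
      k 0 + 2 * k 1 ≤ p 1 + p 2 + 2 * p 4 + p 5 + p 6 + p 9 + p 10 + p 11 then single 5 1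
  else if k 0 + k 1 ≤ p 2 + p 4 + p 5 + p 6 + p 11 then single 2 1
  else singleFirstPos p [7, 0]

theorem greedy₁_mem_sigmaSet (k : Fin 4 → ℤ) (p : Fin 12 → ℤ) :
    greedy₁ k p ∈ SigmaSet (single 0 1) := by
  rw [greedy₁]
  split_ifs <;> (try simp only [singleFirstPos]) <;> (try split_ifs) <;>
    simp [mem_sigmaSet_iff_of_apply_two_three]

theorem sub_greedy₁_mem_sigmaSet (h0 : 1 ≤ k 0) (h2 : k 2 = 0) (h3 : k 3 = 0)
    (hp : p ∈ SigmaSet k) :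
    p - greedy₁ k p ∈ SigmaSet (k - single 0 1) := by
  generalize hq : greedy₁ k p = q
  rw [mem_sigmaSet_iff_of_apply_two_three (by simpa) (by simpa)] at hp ⊢
  simp only [Pi.sub_apply, Pi.single_apply, Fin.reduceEq, if_true, if_false] at hp ⊢
  rw [greedy₁] at hq
  split_ifs at hq <;> (try simp only [singleFirstPos] at hq) <;> (try split_ifs at hq) <;>
    subst hq <;>
    simp only [Pi.add_apply, Pi.zero_apply, Pi.single_apply, Fin.reduceEq, if_true, if_false] <;>
    grind (splits := 100)

/-- The part of `p` split off in direction `ω₂`: an element of `SigmaSet (single 1 1)`, chosen so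
that subtracting it from `p ∈ SigmaSet k` with `k 0 = k 2 = k 3 = 0` lands in
`SigmaSet (k - single 1 1)`. -/
def greedy₂ (k : Fin 4 → ℤ) (p : Fin 12 → ℤ) : Fin 12 → ℤ :=
  if 0 < p 4 then single 4 1 + singleFirstPos p [7, 0]
  else if 0 < p 7 then
    single 7 1 + if k 1 ≤ p 2 + p 5 + p 6 then single 5 1 else singleFirstPos p [10, 0]
  else if 0 < p 1 then
    single 1 1 + if k 1 ≤ p 2 + p 5 + p 6 then single 5 1 else singleFirstPos p [10, 0]
  else if 0 < p 5 then single 5 1 + singleFirstPos p [9, 10, 0]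
  else if 0 < p 2 then single 2 1 + singleFirstPos p [9, 10, 0]
  else if 0 < p 6 then single 6 1 + singleFirstPos p [0]
  else if 0 < p 10 then single 10 1 + singleFirstPos p [0]
  else if 0 < p 9 then single 9 1 + singleFirstPos p [0]
  else if 1 < p 0 then single 0 2
  else singleFirstPos p [0]

theorem greedy₂_mem_sigmaSet (k : Fin 4 → ℤ) (p : Fin 12 → ℤ) :
    greedy₂ k p ∈ SigmaSet (single 1 1) := by
  rw [greedy₂]
  split_ifs <;> (try simp only [singleFirstPos]) <;> (try split_ifs) <;>
    simp [mem_sigmaSet_iff_of_apply_zero_two_three]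

theorem sub_greedy₂_mem_sigmaSet (h0 : k 0 = 0) (h1 : 1 ≤ k 1) (h2 : k 2 = 0) (h3 : k 3 = 0)
    (hp : p ∈ SigmaSet k) :
    p - greedy₂ k p ∈ SigmaSet (k - single 1 1) := by
  generalize hq : greedy₂ k p = q
  rw [mem_sigmaSet_iff_of_apply_zero_two_three (by simpa) (by simpa) (by simpa)] at hp ⊢
  simp only [Pi.sub_apply, Pi.single_apply, if_true] at hp ⊢
  rw [greedy₂] at hq
  split_ifs at hq <;> (try simp only [singleFirstPos] at hq) <;> (try split_ifs at hq) <;>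
    subst hq <;>
    simp only [Pi.add_apply, Pi.zero_apply, Pi.single_apply, Fin.reduceEq, if_true, if_false] <;>
    grind

theorem exists_sigmaSet_subset_sub_single_add (hk : 0 ≤ k) (hk0 : k ≠ 0) :
    ∃ i, 1 ≤ k i ∧ SigmaSet k ⊆ SigmaSet (k - single i 1) + SigmaSet (single i 1) := by
  rcases (hk 3).eq_or_lt'.symm with h3 | h3
  · exact ⟨3, h3, fun p hp => ⟨_, sub_greedy₄_mem_sigmaSet h3 hp, _,
      greedy₄_mem_sigmaSet k p, sub_add_cancel ..⟩⟩
  rcases (hk 2).eq_or_lt'.symm with h2 | h2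
  · exact ⟨2, h2, fun p hp => ⟨_, sub_greedy₃_mem_sigmaSet h2 h3 hp, _,
      greedy₃_mem_sigmaSet k p, sub_add_cancel ..⟩⟩
  rcases (hk 0).eq_or_lt'.symm with h0 | h0
  · exact ⟨0, h0, fun p hp => ⟨_, sub_greedy₁_mem_sigmaSet h0 h2 h3 hp, _,
      greedy₁_mem_sigmaSet k p, sub_add_cancel ..⟩⟩
  rcases (hk 1).eq_or_lt'.symm with h1 | h1
  · exact ⟨1, h1, fun p hp => ⟨_, sub_greedy₂_mem_sigmaSet h0 h1 h2 h3 hp, _,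
      greedy₂_mem_sigmaSet k p, sub_add_cancel ..⟩⟩
  exact absurd (funext fun i => by fin_cases i <;> assumption) hk0

theorem sub_single_one_nonneg {i : Fin 4} (hk : 0 ≤ k) (hi : 1 ≤ k i) :
    0 ≤ k - single i 1 := by
  intro j
  rcases eq_or_ne j i with rfl | hj
  · simpa using hi
  · simpa [hj] using hk j

theorem sigmaSet_subset_add (hk : 0 ≤ k) (hm : 0 ≤ m) :
    SigmaSet (k + m) ⊆ SigmaSet k + SigmaSet m := by
  induction hn : (∑ i, (k + m) i).toNat generalizing k m with
  | zero =>
    have hkm : k + m = 0 := (Fintype.sum_eq_zero_iff_of_nonneg (add_nonneg hk hm)).1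
      ((Int.toNat_eq_zero.1 hn).antisymm (Finset.sum_nonneg fun i _ => add_nonneg (hk i) (hm i)))
    obtain ⟨rfl, rfl⟩ := (add_eq_zero_iff_of_nonneg hk hm).1 hkm
    exact fun p hp => ⟨p, by simpa using hp, 0, zero_mem_sigmaSet_zero, add_zero p⟩
  | succ n ih =>
    have hne : k + m ≠ 0 := by
      intro h
      rw [h] at hn
      simp at hn
    obtain ⟨i, hi, hsub⟩ := exists_sigmaSet_subset_sub_single_add (add_nonneg hk hm) hne
    wlog hki : 1 ≤ k i generalizing k m
    · have hmi : 1 ≤ m i := by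
        rw [Pi.add_apply] at hi
        omega
      rw [add_comm k m] at hn hne hi hsub ⊢
      rw [add_comm (SigmaSet k)]
      exact this hm hk hn hne hi hsub hmi
    have hn' : (∑ j, (k - single i 1 + m : Fin 4 → ℤ) j).toNat = n := by
      rw [sub_add_eq_add_sub]
      simp only [Pi.sub_apply (k + m), Finset.sum_sub_distrib, Finset.sum_pi_single',
        Finset.mem_univ, if_true]
      omega
    calc SigmaSet (k + m)
      _ ⊆ SigmaSet (k - single i 1 + m) + SigmaSet (single i 1) := by
        rwa [sub_add_eq_add_sub]
      _ ⊆ SigmaSet (k - single i 1) + SigmaSet m + SigmaSet (single i 1) :=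
        Set.add_subset_add_right (ih (sub_single_one_nonneg hk hki) hm hn')
      _ = SigmaSet (k - single i 1) + SigmaSet (single i 1) + SigmaSet m := add_right_comm ..
      _ ⊆ SigmaSet (k - single i 1 + single i 1) + SigmaSet m :=
        Set.add_subset_add_right (sigmaSet_add_subset ..)
      _ = SigmaSet k + SigmaSet m := by rw [sub_add_cancel]

/-- Theorem 1 of the paper: Σ(k+m) = Σ(k) + Σ(m) (Minkowski sum in ℤ^12). -/
theorem sigmaSet_add (k m : Fin 4 → ℤ) (hk : ∀ i, 0 ≤ k i) (hm : ∀ i, 0 ≤ m i) :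
    SigmaSet (k + m) = SigmaSet k + SigmaSet m :=
  (sigmaSet_subset_add hk hm).antisymm (sigmaSet_add_subset k m)
end

section
/- For every k = (k1,k2,k3,k4) with nonnegative integer entries, the set Σ(k) is finite and its cardinality equals the Weyl dimension of the irreducible module of type D4 with highest weight k1ω1+k2ω2+k3ω3+k4ω4, namely |Σ(k)| = (∏_{1≤i<j≤4} (L_i² − L_j²)) / 17694720, where L1 = 2k1+2k2+k3+k4+6, L2 = 2k2+k3+k4+4, L3 = k3+k4+2, L4 = k4−k3. (This is Theorem 2 of the paper: |Σ^f(λ)| = dim V(λ) for every dominant weight λ of the Lie algebra of type D4.) -/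
/-!
A *mutation* is a piecewise linear bijection of `ℤ ^ 12`, so it preserves the number of lattice
points of a polytope, and the image of a polytope is again a polytope as long as it stays convex.
After a unimodular change of coordinates, a chain of mutations links `Σ(k)` to the polytope of
orthogonal Gelfand–Tsetlin patterns for the weight obtained from `k` by the triality that exchanges
`k₁` and `k₃`. Patterns are counted along the chain of subgroups `D₄ ⊃ B₃ ⊃ D₃ ⊃ ⋯ ⊃ D₁`: the Weyl
dimensions of type `D` and `B` are determinants of central factorials, and summing such a
determinant over the weights that occur in a restriction telescopes to the determinant one step
higher.
-/

open Finset Matrix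

section Mutation

variable {ι κ : Type*} [Fintype ι] [Fintype κ]

/-- An affine form `x ↦ a ⬝ᵥ x + b ⬝ᵥ k` on `ℤ^ι`, encoded as `(a, b)`: its constant term depends
linearly on a parameter `k : κ → ℤ`, so that one system of forms describes a family of polytopes. -/
abbrev ParamForm (ι κ : Type*) := (ι → ℤ) × (κ → ℤ)

namespace ParamForm

/-- The value of an affine form at the point `x`, for the parameter `k`. -/
def eval (k : κ → ℤ) (x : ι → ℤ) (f : ParamForm ι κ) : ℤ := f.1 ⬝ᵥ x + f.2 ⬝ᵥ k

lemma eval_add (k : κ → ℤ) (x : ι → ℤ) (f g : ParamForm ι κ) :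
    (f + g).eval k x = f.eval k x + g.eval k x := by
  simp only [eval, Prod.fst_add, Prod.snd_add, add_dotProduct]; ring

lemma eval_sub (k : κ → ℤ) (x : ι → ℤ) (f g : ParamForm ι κ) :
    (f - g).eval k x = f.eval k x - g.eval k x := by
  simp only [eval, Prod.fst_sub, Prod.snd_sub, sub_dotProduct]; ring

lemma eval_zsmul (k : κ → ℤ) (x : ι → ℤ) (c : ℤ) (f : ParamForm ι κ) :
    (c • f).eval k x = c * f.eval k x := by
  simp only [eval, Prod.smul_fst, Prod.smul_snd, smul_dotProduct, smul_eq_mul]; ring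

lemma eval_sub_smul (k : κ → ℤ) (x v : ι → ℤ) (c : ℤ) (f : ParamForm ι κ) :
    f.eval k (x - c • v) = f.eval k x - c * (f.1 ⬝ᵥ v) := by
  simp only [eval, dotProduct_sub, dotProduct_smul, smul_eq_mul]; ring

/-- The lattice points of the polytope cut out by a system of affine forms. -/
def polytope (F : List (ParamForm ι κ)) (k : κ → ℤ) : Set (ι → ℤ) := {x | ∀ f ∈ F, 0 ≤ f.eval k x}

/-- The piecewise linear mutation with factor `n` and direction `v` (in the sense of
Akhtar, Coates, Galkin and Kasprzyk): a shear on `n ≤ 0`, the identity on `n ≥ 0`. -/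
def mutation (v : ι → ℤ) (n : ParamForm ι κ) (k : κ → ℤ) (x : ι → ℤ) : ι → ℤ :=
  x - min 0 (n.eval k x) • v

lemma mutation_neg_mutation {v : ι → ℤ} {n : ParamForm ι κ} (hn : n.1 ⬝ᵥ v = 0) (k : κ → ℤ)
    (x : ι → ℤ) : mutation (-v) n k (mutation v n k x) = x := by
  simp only [mutation, eval_sub_smul, hn, mul_zero, sub_zero, smul_neg, sub_neg_eq_add,
    sub_add_cancel]

/-- Both linear branches `g` and `g - (g ⬝ᵥ v) • n` of `g ∘ mutation v n` are, where they apply,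
at least a form of `F`. This certifies that the mutation maps the polytope of `F` into that of
`G`. -/
def Carries (v : ι → ℤ) (n : ParamForm ι κ) (F G : List (ParamForm ι κ)) : Prop :=
  ∀ g ∈ G, (∃ j : ℕ, g - j • n ∈ F) ∧ ∃ j : ℕ, g - (g.1 ⬝ᵥ v) • n + j • n ∈ F

lemma Carries.mapsTo {v : ι → ℤ} {n : ParamForm ι κ} {F G : List (ParamForm ι κ)}
    (h : Carries v n F G) (k : κ → ℤ) :
    Set.MapsTo (mutation v n k) (polytope F k) (polytope G k) := by
  intro x hx g hg
  obtain ⟨⟨i, hi⟩, j, hj⟩ := h g hg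
  have hi := hx _ hi
  have hj := hx _ hj
  rw [← natCast_zsmul] at hi hj
  rw [eval_sub, eval_zsmul] at hi
  rw [eval_add, eval_sub, eval_zsmul, eval_zsmul] at hj
  rw [mutation, eval_sub_smul]
  rcases le_total 0 (n.eval k x) with hn | hn
  · rw [min_eq_left hn]
    nlinarith
  · rw [min_eq_right hn]
    nlinarith

lemma bijOn_mutation {v : ι → ℤ} {n : ParamForm ι κ} {F G : List (ParamForm ι κ)}
    (hn : n.1 ⬝ᵥ v = 0) (hFG : Carries v n F G) (hGF : Carries (-v) n G F) (k : κ → ℤ) :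
    Set.BijOn (mutation v n k) (polytope F k) (polytope G k) := by
  refine Set.InvOn.bijOn (f' := mutation (-v) n k) ⟨fun x _ ↦ mutation_neg_mutation hn k x,
    fun x _ ↦ ?_⟩ (hFG.mapsTo k) (hGF.mapsTo k)
  simpa only [neg_neg] using
    mutation_neg_mutation (v := -v) (by rw [dotProduct_neg, hn, neg_zero]) k x

/-- The forms that cut out the image of the polytope of `F` under a mutation. A form `f` with
`f ⬝ᵥ v > 0` gives the whole string from `f` to `f + (f ⬝ᵥ v) • n`: its inner forms are redundant
as inequalities, but `Mutable` may call for them at a later mutation. -/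
def mutate (v : ι → ℤ) (n : ParamForm ι κ) (F : List (ParamForm ι κ)) : List (ParamForm ι κ) :=
  (F.filter fun f ↦ f.1 ⬝ᵥ v = 0 ∨ f.1 ⬝ᵥ v < 0 ∧ f - (f.1 ⬝ᵥ v) • n ∈ F) ++
    ((F.filter fun f ↦ 0 < f.1 ⬝ᵥ v).flatMap fun f ↦
      (List.range ((f.1 ⬝ᵥ v).toNat + 1)).map fun j ↦ f + j • n).eraseDups

/-- The condition under which the image of the polytope of `F` under a mutation is convex and cut
out by `mutate v n F`: a form `f` with `f ⬝ᵥ v < 0` lies in a string that `F` contains at both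
ends. -/
def Mutable (v : ι → ℤ) (n : ParamForm ι κ) (F : List (ParamForm ι κ)) : Prop :=
  n.1 ⬝ᵥ v = 0 ∧ ∀ f ∈ F, 0 ≤ f.1 ⬝ᵥ v ∨
    ∃ j ∈ List.range ((-(f.1 ⬝ᵥ v)).toNat + 1),
      f - j • n ∈ F ∧ f - j • n - (f.1 ⬝ᵥ v) • n ∈ F

instance (v : ι → ℤ) (n : ParamForm ι κ) (F : List (ParamForm ι κ)) : Decidable (Mutable v n F) :=
  inferInstanceAs (Decidable (_ ∧ _))

lemma mem_mutate {v : ι → ℤ} {n : ParamForm ι κ} {F : List (ParamForm ι κ)} {g : ParamForm ι κ} :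
    g ∈ mutate v n F ↔ (∃ f ∈ F, ∃ i j : ℕ, f.1 ⬝ᵥ v = i + j ∧ f + i • n = g) ∨
      (g ∈ F ∧ g.1 ⬝ᵥ v < 0 ∧ g - (g.1 ⬝ᵥ v) • n ∈ F) := by
  simp only [mutate, List.mem_append, List.mem_filter, List.mem_eraseDups, List.mem_flatMap,
    List.mem_map, List.mem_range, decide_eq_true_eq]
  constructor
  · rintro (⟨hg, hc | hc⟩ | ⟨f, ⟨hf, hc⟩, i, hi, rfl⟩)
    · exact .inl ⟨g, hg, 0, 0, by simpa using hc, by rw [zero_smul, add_zero]⟩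
    · exact .inr ⟨hg, hc⟩
    · exact .inl ⟨f, hf, i, (f.1 ⬝ᵥ v).toNat - i, by lia, rfl⟩
  · rintro (⟨f, hf, i, j, hij, rfl⟩ | ⟨hg, hc⟩)
    · rcases (by positivity : (0 : ℤ) ≤ i + j).eq_or_lt with hc | hc
      · obtain rfl : i = 0 := by lia
        rw [zero_smul, add_zero]
        exact .inl ⟨hf, .inl (by lia)⟩
      · exact .inr ⟨f, ⟨hf, hij ▸ hc⟩, i, by lia, rfl⟩
    · exact .inl ⟨hg, .inr hc⟩

lemma carries_mutate {v : ι → ℤ} {n : ParamForm ι κ} (hn : n.1 ⬝ᵥ v = 0)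
    (F : List (ParamForm ι κ)) : Carries v n F (mutate v n F) := by
  intro g hg
  rcases mem_mutate.1 hg with ⟨f, hf, i, j, hij, rfl⟩ | ⟨hg, -, hg'⟩
  · refine ⟨⟨i, by rwa [add_sub_cancel_right]⟩, j, ?_⟩
    have h_pairing : (f + i • n).1 ⬝ᵥ v = i + j := by
      rw [Prod.fst_add, Prod.smul_fst, add_dotProduct, smul_dotProduct, hn, smul_zero, add_zero,
        hij]
    have h_start : f + i • n - (i + j : ℤ) • n + j • n = f := by module
    rwa [h_pairing, h_start]
  · exact ⟨⟨0, by rwa [zero_smul, sub_zero]⟩, 0, by rwa [zero_smul, add_zero]⟩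

lemma Mutable.carries_neg {v : ι → ℤ} {n : ParamForm ι κ} {F : List (ParamForm ι κ)}
    (h : Mutable v n F) : Carries (-v) n (mutate v n F) F := by
  intro f hf
  rw [dotProduct_neg, neg_smul, sub_neg_eq_add]
  rcases le_or_gt 0 (f.1 ⬝ᵥ v) with hc | hc
  · obtain ⟨c, hc⟩ := Int.eq_ofNat_of_zero_le hc
    have h_first : f ∈ mutate v n F :=
      mem_mutate.2 <| .inl ⟨f, hf, 0, c, by simpa using hc, by rw [zero_smul, add_zero]⟩
    have h_last : f + c • n ∈ mutate v n F :=
      mem_mutate.2 <| .inl ⟨f, hf, c, 0, by simpa using hc, rfl⟩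
    exact ⟨⟨0, by rwa [zero_smul, sub_zero]⟩, 0, by rwa [zero_smul, add_zero, hc, natCast_zsmul]⟩
  · obtain ⟨i, hi, h_start, h_end⟩ := (h.2 f hf).resolve_left hc.not_ge
    rw [List.mem_range] at hi
    obtain ⟨j, hj⟩ : ∃ j : ℕ, f.1 ⬝ᵥ v = -(i + j) := ⟨(-(f.1 ⬝ᵥ v)).toNat - i, by lia⟩
    have h_pairing : (f - i • n).1 ⬝ᵥ v = f.1 ⬝ᵥ v := by
      rw [Prod.fst_sub, Prod.smul_fst, sub_dotProduct, smul_dotProduct, h.1, smul_zero, sub_zero]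
    have h_mem : f - i • n ∈ mutate v n F :=
      mem_mutate.2 <| .inr ⟨h_start, h_pairing ▸ hc, h_pairing ▸ h_end⟩
    have h_eq : f + (f.1 ⬝ᵥ v) • n + j • n = f - i • n := by rw [hj]; module
    exact ⟨⟨i, h_mem⟩, j, by rwa [h_eq]⟩

theorem Mutable.bijOn {v : ι → ℤ} {n : ParamForm ι κ} {F : List (ParamForm ι κ)}
    (h : Mutable v n F) (k : κ → ℤ) :
    Set.BijOn (mutation v n k) (polytope F k) (polytope (mutate v n F) k) :=
  bijOn_mutation h.1 (carries_mutate h.1 F) h.carries_neg k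

/-- `F` is the system `G` together with means of two forms of `G`, so that both cut out the same
polytope. -/
def IsMeanOf (F G : List (ParamForm ι κ)) : Prop :=
  -- `G` is searched backwards because the halves of a sum tend to be the long forms at its end.
  (∀ g ∈ G, g ∈ F) ∧ ∀ f ∈ F, f ∈ G ∨ ∃ g ∈ G.reverse, 2 • f - g ∈ G

instance (F G : List (ParamForm ι κ)) : Decidable (IsMeanOf F G) :=
  inferInstanceAs (Decidable (_ ∧ _))

lemma IsMeanOf.polytope_eq {F G : List (ParamForm ι κ)} (h : IsMeanOf F G) (k : κ → ℤ) :
    polytope F k = polytope G k := by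
  refine Set.Subset.antisymm (fun x hx g hg ↦ hx g (h.1 g hg)) fun x hx f hf ↦ ?_
  rcases h.2 f hf with hfG | ⟨g, hg, hg'⟩
  · exact hx f hfG
  · have hg := hx g (List.mem_reverse.1 hg)
    have hg' := hx _ hg'
    rw [← natCast_zsmul, eval_sub, eval_zsmul] at hg'
    lia

/-- The mutations in `chain`, given by their directions and factors, can be performed one after
the other on the system `F`, and the result is the system `G` up to redundant forms. -/
def MutatesTo : List ((ι → ℤ) × ParamForm ι κ) →
    List (ParamForm ι κ) → List (ParamForm ι κ) → Prop
  | [], F, G => IsMeanOf F G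
  | (v, n) :: chain, F, G => Mutable v n F ∧ MutatesTo chain (mutate v n F) G

instance instDecidableMutatesTo : ∀ (chain : List ((ι → ℤ) × ParamForm ι κ))
    (F G : List (ParamForm ι κ)), Decidable (MutatesTo chain F G)
  | [], F, G => inferInstanceAs (Decidable (IsMeanOf F G))
  | (v, n) :: chain, F, G =>
    have := instDecidableMutatesTo chain (mutate v n F) G
    inferInstanceAs (Decidable (_ ∧ _))

theorem MutatesTo.encard_eq {chain : List ((ι → ℤ) × ParamForm ι κ)} {F G : List (ParamForm ι κ)}
    (h : MutatesTo chain F G) (k : κ → ℤ) : (polytope F k).encard = (polytope G k).encard := by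
  induction chain generalizing F with
  | nil => rw [IsMeanOf.polytope_eq h]
  | cons m chain ih => exact (Set.encard_congr ((h.1.bijOn k).equiv _)).trans (ih h.2)

end ParamForm
end Mutation

section Substitution

variable {ι κ : Type*} [Fintype ι] [Fintype κ]

namespace ParamForm

/-- The pullback of an affine form along the affine map `x ↦ A *ᵥ x + B *ᵥ k`. -/
def substitute (A : Matrix ι ι ℤ) (B : Matrix ι κ ℤ) (f : ParamForm ι κ) : ParamForm ι κ :=
  (f.1 ᵥ* A, f.1 ᵥ* B + f.2)

lemma eval_substitute (A : Matrix ι ι ℤ) (B : Matrix ι κ ℤ) (f : ParamForm ι κ) (k : κ → ℤ)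
    (x : ι → ℤ) : (substitute A B f).eval k x = f.eval k (A *ᵥ x + B *ᵥ k) := by
  simp only [eval, substitute, dotProduct_add, add_dotProduct, dotProduct_mulVec, add_assoc]

lemma polytope_map_substitute (A : Matrix ι ι ℤ) (B : Matrix ι κ ℤ) (F : List (ParamForm ι κ))
    (k : κ → ℤ) : polytope (F.map (substitute A B)) k =
      (fun x ↦ A *ᵥ x + B *ᵥ k) ⁻¹' polytope F k := by
  ext x
  simp only [polytope, Set.mem_preimage, Set.mem_ofPred_eq, List.forall_mem_map, eval_substitute]

lemma encard_polytope_map_substitute [DecidableEq ι] {A A' : Matrix ι ι ℤ} (hA : A' * A = 1)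
    (B : Matrix ι κ ℤ) (F : List (ParamForm ι κ)) (k : κ → ℤ) :
    (polytope (F.map (substitute A B)) k).encard = (polytope F k).encard := by
  have h_linear : Function.Bijective (A *ᵥ ·) := Function.bijective_iff_has_inverse.2 ⟨(A' *ᵥ ·),
    fun x ↦ by simp only [mulVec_mulVec, hA, one_mulVec],
    fun x ↦ by simp only [mulVec_mulVec, mul_eq_one_comm.1 hA, one_mulVec]⟩
  rw [polytope_map_substitute]
  exact Set.encard_preimage_of_bijective ((Equiv.addRight (B *ᵥ k)).bijective.comp h_linear) _

end ParamForm
end Substitution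

section CentralFactorial

/-- The central factorial `u (u + m - 2) (u + m - 4) ⋯ (u - m + 2)` of step two, divided by
`2 ^ m * m !` so that the central difference of the `m + 1`-st one is the `m`-th one. -/
def centralFactorial : ℕ → ℤ → ℚ
  | 0, _ => 1
  | 1, u => u / 2
  | m + 2, u => centralFactorial m u * (u ^ 2 - m ^ 2) / (4 * (m + 1) * (m + 2))

lemma centralFactorial_neg (u : ℤ) :
    ∀ m, centralFactorial m (-u) = (-1) ^ m * centralFactorial m u
  | 0 => by simp only [centralFactorial, pow_zero, one_mul]
  | 1 => by simp only [centralFactorial, Int.cast_neg]; ring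
  | m + 2 => by
    simp only [centralFactorial, centralFactorial_neg u m, Int.cast_neg]
    ring

lemma centralFactorial_two_mul_neg (u : ℤ) (j : ℕ) :
    centralFactorial (2 * j) (-u) = centralFactorial (2 * j) u := by
  rw [centralFactorial_neg, (even_two_mul j).neg_one_pow, one_mul]

lemma centralFactorial_two_mul_add_one_neg (u : ℤ) (j : ℕ) :
    centralFactorial (2 * j + 1) (-u) = -centralFactorial (2 * j + 1) u := by
  rw [centralFactorial_neg, (odd_two_mul_add_one j).neg_one_pow, neg_one_mul]

-- The two equations determine `centralFactorial (m + 1) (u ± 1)`, whence an induction on both.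
lemma centralFactorial_shift (u : ℤ) : ∀ m : ℕ,
    centralFactorial (m + 1) (u + 1) - centralFactorial (m + 1) (u - 1) = centralFactorial m u ∧
    (u - m) * centralFactorial (m + 1) (u + 1) + (u + m) * centralFactorial (m + 1) (u - 1) =
      (u ^ 2 - m ^ 2) / (m + 1) * centralFactorial m u
  | 0 => by
    simp only [centralFactorial]
    constructor <;> push_cast <;> ring
  | 1 => by
    simp only [centralFactorial]
    constructor <;> push_cast <;> ring
  | m + 2 => by
    obtain ⟨h_diff, h_sum⟩ := centralFactorial_shift u m
    simp only [centralFactorial] at *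
    generalize centralFactorial (m + 1) (u + 1) = A at *
    generalize centralFactorial (m + 1) (u - 1) = B at *
    push_cast at *
    constructor
    · linear_combination (norm := (field_simp; ring))
        ((u ^ 2 - m ^ 2) * h_diff + 2 * h_sum) / (4 * (m + 2) * (m + 3))
    · linear_combination (norm := (field_simp; ring))
        (u ^ 2 - (m + 2) ^ 2) / (4 * (m + 2) * (m + 3)) * h_sum

lemma centralFactorial_add_one_sub_sub_one (m : ℕ) (u : ℤ) :
    centralFactorial (m + 1) (u + 1) - centralFactorial (m + 1) (u - 1) = centralFactorial m u :=
  (centralFactorial_shift u m).1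

lemma centralFactorial_two_mul (u : ℤ) (j : ℕ) :
    centralFactorial (2 * j) u =
      (∏ i ∈ range j, ((u : ℚ) ^ 2 - (2 * i) ^ 2)) / (4 ^ j * (2 * j).factorial) := by
  induction j with
  | zero => simp only [centralFactorial, mul_zero, prod_range_zero, pow_zero, Nat.factorial_zero,
      Nat.cast_one, mul_one, div_one]
  | succ j ih =>
    rw [mul_add_one, centralFactorial, ih, prod_range_succ, pow_succ, Nat.factorial_succ,
      Nat.factorial_succ]
    push_cast
    field_simp
    ring

lemma det_centralFactorial {n : ℕ} (u : Fin n → ℤ) :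
    det (of fun i j : Fin n ↦ centralFactorial (2 * j) (u i)) =
      (∏ i, ∏ j ∈ Ioi i, ((u j : ℚ) ^ 2 - (u i : ℚ) ^ 2)) /
        ∏ j : Fin n, (4 ^ (j : ℕ) * (2 * (j : ℕ)).factorial : ℚ) := by
  let p (j : Fin n) : Polynomial ℚ :=
    ∏ i ∈ range j, (Polynomial.X - Polynomial.C ((2 * (i : ℚ)) ^ 2))
  have h_degree (j : Fin n) : (p j).natDegree = j := by
    rw [Polynomial.natDegree_prod_of_monic _ _ fun i _ ↦ Polynomial.monic_X_sub_C (R := ℚ) _]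
    simp only [Polynomial.natDegree_X_sub_C, sum_const, card_range, smul_eq_mul, mul_one]
  have h_monic (j : Fin n) : (p j).Monic :=
    Polynomial.monic_prod_of_monic _ _ fun i _ ↦ Polynomial.monic_X_sub_C _
  have h_entry (i j : Fin n) : centralFactorial (2 * j) (u i) =
      (4 ^ (j : ℕ) * (2 * (j : ℕ)).factorial : ℚ)⁻¹ * (p j).eval ((u i : ℚ) ^ 2) := by
    rw [centralFactorial_two_mul, Polynomial.eval_prod, div_eq_inv_mul]
    simp only [Polynomial.eval_sub, Polynomial.eval_X, Polynomial.eval_C]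
  have h_vandermonde := det_eval_matrixOfPolynomials_eq_det_vandermonde
    (fun i ↦ (u i : ℚ) ^ 2) p h_degree h_monic
  simp only [h_entry]
  rw [det_vandermonde] at h_vandermonde
  rw [h_vandermonde, div_eq_inv_mul, ← prod_inv_distrib]
  exact det_mul_row (fun j : Fin n ↦ (4 ^ (j : ℕ) * (2 * (j : ℕ)).factorial : ℚ)⁻¹) _

end CentralFactorial

section Telescoping

lemma sum_Icc_eq_sub {M : Type*} [AddCommGroup M] {f F : ℤ → M}
    (h : ∀ u, F (u + 1) - F (u - 1) = f u) (c : ℤ) {a b : ℤ} (hab : a ≤ b + 1) :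
    ∑ x ∈ Icc a b, f (2 * x + c) = F (2 * b + c + 1) - F (2 * a + c - 1) := by
  obtain ⟨b, rfl⟩ : ∃ b', b = b' - 1 := ⟨b + 1, by ring⟩
  rw [sub_add_cancel] at hab
  induction b, hab using Int.leInduction with
  | base =>
    rw [Icc_eq_empty (by lia), sum_empty, eq_comm, sub_eq_zero]
    congr 1
    ring
  | succ b hab ih =>
    have h_insert : Icc a (b + 1 - 1) = insert b (Icc a (b - 1)) := by
      ext x
      simp only [mem_Icc, mem_insert]
      lia
    rw [h_insert, sum_insert (by simp), ih, ← h]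
    ring_nf
    abel

lemma sum_piFinset_det {ι R : Type*} [DecidableEq ι] [Fintype ι] [CommRing R] (S : ι → Finset ℤ)
    (f : ι → ι → ℤ → R) :
    ∑ x ∈ Fintype.piFinset S, det (of fun i j ↦ f i j (x i)) =
      det (of fun i j ↦ ∑ y ∈ S i, f i j y) := by
  have h_multilinear := (detRowAlternating (n := ι) (R := R)).toMultilinearMap.map_sum_finset
    (fun i y j ↦ f i j y) S
  refine h_multilinear.symm.trans (congrArg det ?_)
  ext i j
  exact sum_apply ..

end Telescoping

section RowOperations

variable {R : Type*} [CommRing R] {n : ℕ}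

lemma det_rowDifferences (A : Matrix (Fin (n + 1)) (Fin (n + 1)) R) :
    det (of (Fin.cons (A 0) fun i : Fin n ↦ A i.succ - A i.castSucc)) = det A := by
  symm
  refine det_eq_of_forall_row_eq_smul_add_pred (fun _ ↦ (1 : R)) (fun _ ↦ rfl) fun i j ↦ ?_
  simp only [of_apply, Fin.cons_succ, Pi.sub_apply, one_mul, sub_add_cancel]

lemma det_rowDifferences_of_col_eq_one {A : Matrix (Fin (n + 1)) (Fin (n + 1)) R}
    (hA : ∀ i, A i 0 = 1) :
    det (of fun i j : Fin n ↦ A i.succ j.succ - A i.castSucc j.succ) = det A := by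
  have h_below (i : Fin n) : of (Fin.cons (A 0) fun i : Fin n ↦ A i.succ - A i.castSucc) i.succ 0 =
      0 := by
    simp only [of_apply, Fin.cons_succ, Pi.sub_apply, hA, sub_self]
  rw [← det_rowDifferences A, det_succ_column_zero, Fin.sum_univ_succ, sum_eq_zero fun i _ ↦ by
    rw [h_below, mul_zero, zero_mul], of_apply, Fin.cons_zero, hA, Fin.val_zero, pow_zero, one_mul,
    one_mul, add_zero, Fin.succAbove_zero]
  rfl

lemma det_eq_mul_det_of_rowDifferences {A B : Matrix (Fin (n + 1)) (Fin (n + 1)) R} {c : R}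
    (h_zero : ∀ j, B 0 j = c * A 0 j)
    (h_succ : ∀ (i : Fin n) j, B i.succ j = A i.succ j - A i.castSucc j) :
    det B = c * det A := by
  have hB : B = of fun i j ↦ (Fin.cons c 1 : Fin (n + 1) → R) i *
      of (Fin.cons (A 0) fun i : Fin n ↦ A i.succ - A i.castSucc) i j := by
    ext i j
    cases i using Fin.cases with
    | zero => simp [h_zero]
    | succ i => simp [h_succ]
  rw [hB, det_mul_column, det_rowDifferences, Fin.prod_cons]
  simp

end RowOperations

noncomputable section Patterns

variable {n : ℕ} {s : ℤ}

namespace GelfandTsetlin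

/-- A Gelfand–Tsetlin pattern for the chain `D (n + 1) ⊃ B n ⊃ D n ⊃ ⋯ ⊃ D 1`, without its top row:
the weights for `B n` and for `D n`, followed by the rest of the pattern. -/
def Pattern : ℕ → Type
  | 0 => Unit
  | n + 1 => Σ _ : Fin (n + 1) → ℤ, Σ _ : Fin (n + 1) → ℤ, Pattern n

/-- The pattern without rows. -/
def Pattern.nil : Pattern 0 := ()

/-- Adds the two rows for `B (n + 1)` and `D (n + 1)` to a pattern. -/
def Pattern.cons (m l : Fin (n + 1) → ℤ) (q : Pattern n) : Pattern (n + 1) := ⟨m, l, q⟩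

/-- The lower bounds in the branching rule from `D (n + 1)` to `B n`. A weight is written in
increasing order and shifted by `s / 2`, so that a sign change reads `x ↦ -s - x` and half-integral
weights have integral entries for odd `s`. -/
def lowerD (s : ℤ) (l : Fin (n + 1) → ℤ) (i : Fin n) : ℤ := max (l i.castSucc) (-s - l i.castSucc)

/-- The lower bounds in the branching rule from `B (n + 1)` to `D (n + 1)`. -/
def lowerB (s : ℤ) (m : Fin (n + 1) → ℤ) : Fin (n + 1) → ℤ :=
  Fin.cases (-s - m 0) fun i ↦ m i.castSucc

/-- The weights for `B n` that occur in the restriction of `l` from `D (n + 1)`. -/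
def restrictD (s : ℤ) (l : Fin (n + 1) → ℤ) : Finset (Fin n → ℤ) :=
  Fintype.piFinset fun i ↦ Icc (lowerD s l i) (l i.succ)

/-- The weights for `D (n + 1)` that occur in the restriction of `m` from `B (n + 1)`. -/
def restrictB (s : ℤ) (m : Fin (n + 1) → ℤ) : Finset (Fin (n + 1) → ℤ) :=
  Fintype.piFinset fun i ↦ Icc (lowerB s m i) (m i)

/-- The Gelfand–Tsetlin patterns with top row `l`. -/
def patterns (s : ℤ) : ∀ n, (Fin (n + 1) → ℤ) → Finset (Pattern n)
  | 0, _ => {Pattern.nil}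
  | n + 1, l => (restrictD s l).sigma fun m ↦ (restrictB s m).sigma fun l' ↦ patterns s n l'

/-- Dominance of a weight for `D (n + 1)`. -/
def IsDominantD (s : ℤ) (l : Fin (n + 1) → ℤ) : Prop := ∀ i : Fin n, lowerD s l i ≤ l i.succ

/-- Dominance of a weight for `B (n + 1)`. -/
def IsDominantB (s : ℤ) (m : Fin (n + 1) → ℤ) : Prop := ∀ i, lowerB s m i ≤ m i

lemma isDominantB_of_mem_restrictD {l : Fin (n + 2) → ℤ} {m : Fin (n + 1) → ℤ}
    (hm : m ∈ restrictD s l) : IsDominantB s m := by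
  simp only [restrictD, lowerD, Fintype.mem_piFinset, mem_Icc, sup_le_iff] at hm
  intro i
  cases i using Fin.cases with
  | zero =>
    have := hm 0
    simp only [lowerB, Fin.cases_zero]
    lia
  | succ i =>
    have := hm i.castSucc
    have := hm i.succ
    simp only [lowerB, Fin.cases_succ, Fin.succ_castSucc] at *
    lia

lemma IsDominantB.isDominantD {m l : Fin (n + 1) → ℤ} (hm : IsDominantB s m)
    (hl : l ∈ restrictB s m) : IsDominantD s l := by
  have h_succ (i : Fin n) : m i.castSucc ≤ m i.succ := hm i.succ
  have h_mono : Monotone m := Fin.monotone_iff_le_succ.2 h_succ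
  have h_zero : -s - m 0 ≤ m 0 := hm 0
  simp only [restrictB, Fintype.mem_piFinset, mem_Icc] at hl
  intro i
  have h_next : m i.castSucc ≤ l i.succ := (hl i.succ).1
  have h_self := (hl i.castSucc).2
  have h_lower : -s - m i.castSucc ≤ l i.castSucc := by
    refine le_trans ?_ (hl i.castSucc).1
    cases n with
    | zero => exact i.elim0
    | succ n =>
      cases i using Fin.cases with
      | zero => exact le_rfl
      | succ i =>
        have := h_mono (Fin.zero_le i.succ.castSucc)
        have := h_mono (Fin.zero_le i.castSucc.castSucc)
        simp only [← Fin.succ_castSucc, lowerB, Fin.cases_succ] at *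
        lia
  exact max_le (by lia) (by lia)

/-- Up to a factor, the numerator of the Weyl dimension formula for the weight `l` of `D n`. -/
def detD (s : ℤ) (l : Fin n → ℤ) : ℚ :=
  det (of fun i j : Fin n ↦ centralFactorial (2 * j) (2 * l i + (s + 2 * i)))

/-- Up to a factor, the numerator of the Weyl dimension formula for the weight `m` of `B n`. -/
def detB (s : ℤ) (m : Fin n → ℤ) : ℚ :=
  det (of fun i j : Fin n ↦ centralFactorial (2 * j + 1) (2 * m i + (s + 2 * i) + 1))

lemma IsDominantD.centralFactorial_lowerD {l : Fin (n + 1) → ℤ} (hl : IsDominantD s l) (i : Fin n)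
    (j : ℕ) : centralFactorial (2 * j) (2 * lowerD s l i + (s + 2 * i)) =
      centralFactorial (2 * j) (2 * l i.castSucc + (s + 2 * i)) := by
  rcases max_choice (l i.castSucc) (-s - l i.castSucc) with h_max | h_max
  · rw [lowerD, h_max]
  · cases n with
    | zero => exact i.elim0
    | succ n =>
      cases i using Fin.cases with
      | zero =>
        rw [lowerD, h_max, ← centralFactorial_two_mul_neg]
        congr 1
        simp only [Fin.val_zero]
        ring
      | succ i =>
        have h_prev := hl i.castSucc
        simp only [lowerD, sup_le_iff, Fin.succ_castSucc] at h_prev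
        rw [lowerD, max_eq_left (by lia)]

lemma IsDominantD.sum_restrictD_detB {l : Fin (n + 1) → ℤ} (hl : IsDominantD s l) :
    ∑ m ∈ restrictD s l, detB s m = detD s l := by
  rw [restrictD, detD, ← det_rowDifferences_of_col_eq_one fun i ↦ by simp [centralFactorial]]
  simp only [detB, add_assoc _ _ (1 : ℤ)]
  rw [sum_piFinset_det _ fun (i j : Fin n) x ↦
    centralFactorial (2 * j + 1) (2 * x + (s + (2 * i + 1)))]
  congr with i j
  have h_upper : 2 * l i.succ + (s + (2 * i + 1)) + 1 = 2 * l i.succ + (s + 2 * (i + 1)) := by ring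
  have h_lower : 2 * lowerD s l i + (s + (2 * i + 1)) - 1 = 2 * lowerD s l i + (s + 2 * i) := by
    ring
  have h_degree : 2 * (j : ℕ) + 1 + 1 = 2 * (j + 1) := by ring
  rw [of_apply, sum_Icc_eq_sub (centralFactorial_add_one_sub_sub_one _) _
    ((hl i).trans (lt_add_one _).le), h_upper, h_lower, h_degree, hl.centralFactorial_lowerD]
  simp only [of_apply, Fin.val_succ, Fin.val_castSucc, Nat.cast_add, Nat.cast_one]

lemma IsDominantB.sum_restrictB_detD {m : Fin (n + 1) → ℤ} (hm : IsDominantB s m) :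
    ∑ l ∈ restrictB s m, detD s l = 2 * detB s m := by
  simp only [detD]
  rw [restrictB, sum_piFinset_det _ fun (i j : Fin _) x ↦
    centralFactorial (2 * j) (2 * x + (s + 2 * i))]
  refine det_eq_mul_det_of_rowDifferences (fun j ↦ ?_) fun i j ↦ ?_
  all_goals
    rw [of_apply, sum_Icc_eq_sub (centralFactorial_add_one_sub_sub_one _) _
      ((hm _).trans (lt_add_one _).le)]
  · have h_lower : 2 * (-s - m 0) + (s + 2 * (0 : ℤ)) - 1 = -(2 * m 0 + (s + 2 * (0 : ℤ)) + 1) := by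
      ring
    simp only [of_apply, lowerB, Fin.cases_zero, Fin.val_zero, Nat.cast_zero]
    rw [h_lower, centralFactorial_two_mul_add_one_neg]
    ring
  · have h_lower : 2 * m i.castSucc + (s + 2 * (i + 1)) - 1 =
        2 * m i.castSucc + (s + 2 * (i : ℤ)) + 1 := by ring
    simp only [of_apply, lowerB, Fin.cases_succ, Fin.val_succ, Fin.val_castSucc, Nat.cast_add,
      Nat.cast_one, h_lower]

lemma nil_mem_patterns (l : Fin 1 → ℤ) : Pattern.nil ∈ patterns s 0 l := mem_singleton_self _

lemma mem_patterns_succ {l : Fin (n + 2) → ℤ} {m l' : Fin (n + 1) → ℤ} {q : Pattern n} :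
    Pattern.cons m l' q ∈ patterns s (n + 1) l ↔
      m ∈ restrictD s l ∧ l' ∈ restrictB s m ∧ q ∈ patterns s n l' :=
  mem_sigma.trans (and_congr_right' mem_sigma)

lemma card_patterns_succ (l : Fin (n + 2) → ℤ) : (patterns s (n + 1) l).card =
    ∑ m ∈ restrictD s l, ∑ l' ∈ restrictB s m, (patterns s n l').card :=
  (card_sigma ..).trans (sum_congr rfl fun _ _ ↦ card_sigma ..)

lemma card_patterns {l : Fin (n + 1) → ℤ} (hl : IsDominantD s l) :
    ((patterns s n l).card : ℚ) = 2 ^ n * detD s l := by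
  induction n with
  | zero =>
    have h_card : (patterns s 0 l).card = 1 := card_singleton _
    simp [h_card, detD, centralFactorial]
  | succ n ih =>
    have h_below {m : Fin (n + 1) → ℤ} (hm : m ∈ restrictD s l) :
        ∑ l' ∈ restrictB s m, ((patterns s n l').card : ℚ) = 2 ^ (n + 1) * detB s m := by
      have hm := isDominantB_of_mem_restrictD hm
      rw [sum_congr rfl fun l' hl' ↦ ih (hm.isDominantD hl'), ← mul_sum, hm.sum_restrictB_detD]
      ring
    simp only [card_patterns_succ, Nat.cast_sum]
    rw [sum_congr rfl fun m ↦ h_below, ← mul_sum, hl.sum_restrictD_detB]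

theorem card_patterns_eq_prod {l : Fin (n + 1) → ℤ} (hl : IsDominantD s l) :
    ((patterns s n l).card : ℚ) = 2 ^ n * ((∏ i, ∏ j ∈ Ioi i,
      (((2 * l j + (s + 2 * j) : ℤ) : ℚ) ^ 2 - ((2 * l i + (s + 2 * i) : ℤ) : ℚ) ^ 2)) /
        ∏ j : Fin (n + 1), (4 ^ (j : ℕ) * (2 * (j : ℕ)).factorial : ℚ)) := by
  rw [card_patterns hl, detD, det_centralFactorial]

end GelfandTsetlin
end Patterns

section Forms

local notation "m₀" => (Pi.single 0 1 : Fin 12 → ℤ)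
local notation "m₁" => (Pi.single 1 1 : Fin 12 → ℤ)
local notation "m₂" => (Pi.single 2 1 : Fin 12 → ℤ)
local notation "n₀" => (Pi.single 3 1 : Fin 12 → ℤ)
local notation "n₁" => (Pi.single 4 1 : Fin 12 → ℤ)
local notation "n₂" => (Pi.single 5 1 : Fin 12 → ℤ)
local notation "a₀" => (Pi.single 6 1 : Fin 12 → ℤ)
local notation "a₁" => (Pi.single 7 1 : Fin 12 → ℤ)
local notation "b₀" => (Pi.single 8 1 : Fin 12 → ℤ)
local notation "b₁" => (Pi.single 9 1 : Fin 12 → ℤ)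
local notation "c₀" => (Pi.single 10 1 : Fin 12 → ℤ)
local notation "d₀" => (Pi.single 11 1 : Fin 12 → ℤ)
local notation "l₀" => (![-1, 0, 0, 0] : Fin 4 → ℤ)
local notation "l₂" => (![0, 1, 0, 0] : Fin 4 → ℤ)
local notation "l₃" => (![0, 1, 1, 0] : Fin 4 → ℤ)
local notation "s" => (![1, 0, 0, 1] : Fin 4 → ℤ)

/-- The system of the Gelfand–Tsetlin patterns with top row `topRow k`. The rows below it are named
`m`, `n`, `a`, `b`, `c`, `d` from top to bottom, and `0`, `l₀`, `l₂`, `l₃`, `s` are the entries of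
`topRow k` and the shift. -/
def gtForms : List (ParamForm (Fin 12) (Fin 4)) :=
  [(m₀, -l₀), (m₀, l₀ + s), (-m₀, 0), (m₁, 0), (-m₁, l₂), (m₂, -l₂), (-m₂, l₃),
   (m₀ + n₀, s), (m₀ - n₀, 0), (n₁ - m₀, 0), (m₁ - n₁, 0), (n₂ - m₁, 0), (m₂ - n₂, 0),
   (a₀ - n₀, 0), (n₀ + a₀, s), (n₁ - a₀, 0), (a₁ - n₁, 0), (n₂ - a₁, 0),
   (a₀ + b₀, s), (a₀ - b₀, 0), (b₁ - a₀, 0), (a₁ - b₁, 0),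
   (c₀ - b₀, 0), (b₀ + c₀, s), (b₁ - c₀, 0),
   (c₀ + d₀, s), (c₀ - d₀, 0)]

/-- The directions and factors of the mutations from the polytope of Gelfand–Tsetlin patterns to
`Σ(k)`, found by a computer search. -/
def sigmaChain : List ((Fin 12 → ℤ) × ParamForm (Fin 12) (Fin 4)) :=
  [(b₀, a₀ - c₀, 0),
   (-c₀, d₀ - b₀, 0),
   (-m₀, n₀, l₀ + s),
   (b₀ - a₀ - c₀, n₀ + a₀ + d₀ - c₀, s),
   (-b₀ - b₁, a₀ - c₀, 0),
   (-a₀ - b₁, n₀ + b₁ + d₀ - a₀ - b₀ - c₀, 0),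
   (-a₁ - b₁, a₀ + b₀ + c₀ - n₀ - n₁ - d₀, 0),
   (b₀ - m₀ - n₀ - n₁ - a₀ - c₀, m₀ + d₀ - c₀, -l₀),
   (n₁ - n₂ - a₁ - b₁, n₂ + a₀ + b₀ + c₀ - m₁ - n₀ - a₁ - d₀, 0),
   (m₀, n₀, l₀ + s),
   (m₁ + n₁ - m₂ - n₂ - a₁ - b₁, m₂ + a₀ + b₀ + c₀ - n₀ - a₁ - d₀, -l₂),
   (m₀ - m₁, m₀ + m₁ - n₁, 0),
   (a₀ + b₁, n₀ + b₁ + d₀ - a₀ - b₀ - c₀, 0),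
   (-n₀ - n₂, n₁ + b₁ - m₀ - m₁, 0),
   (-m₁, n₀, l₀ + s),
   (-m₂ - n₀ - n₂, m₀ + n₂ - m₂ - n₁ - b₁, l₂),
   (n₀ + n₂, n₁ + b₁ - m₀ - m₁, 0),
   (-m₂ - 2 • n₂ - a₁ - b₁, m₀ + a₁ + d₀ - m₂ - n₁ - b₀ - c₀, l₂),
   (-a₁ - b₀, a₀ - c₀, 0),
   (m₁ + n₁ + a₀ + c₀ + d₀ - m₂ - b₀, n₀ + a₁ + d₀ - n₁ - n₂ - b₀ - c₀, l₂),
   (m₁ - m₀ - m₂ - n₀ - n₂, m₂ + 2 • n₁ + b₀ + b₁ + c₀ - 2 • m₀ - m₁ - a₁ - d₀, -l₂),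
   (m₂ + b₀ - m₁ - n₁ - a₀ - c₀ - d₀, n₀ + a₁ + d₀ - n₁ - n₂ - b₀ - c₀, l₂),
   (-m₁ - n₀ - n₂ - a₀ - a₁ - b₀ - b₁, n₁ + b₀ + 2 • c₀ - m₀ - m₁ - d₀, l₀ + s),
   (c₀ + d₀, m₂ + n₁ - m₀, -l₃),
   (m₁ - m₀ - m₂ - n₀ - n₂ - a₀ - a₁ - b₀ - b₁, m₀ + a₁ + c₀ - a₀ - b₁, l₀ + l₂ + s - l₃),
   (m₁ - m₀ - m₂ - n₀ - n₂ - a₀ - a₁ - b₀ - b₁ - c₀ - d₀, m₂ + n₁ - m₀, -l₃),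
   (m₂ + 2 • n₂ + a₁ + b₁, m₀ + a₁ + d₀ - m₂ - n₁ - b₀ - c₀, l₂),
   (2 • m₁ - m₀ - m₂, n₁ + a₀ + b₀ + b₁ + c₀ - 2 • m₀ - m₁ - a₁ - d₀, l₃ - l₂),
   (m₁ + n₁ + a₀ + c₀ - m₂ - n₂ - b₀, m₀ + m₁ - n₁, 0)]

/-- The system that defines `SigmaSet k`. -/
def sigmaForms : List (ParamForm (Fin 12) (Fin 4)) :=
  (List.finRange 12).map (fun j ↦ (Pi.single j 1, 0)) ++
  [(-![0, 0, 0, 0, 0, 0, 0, 0, 0, 0, 0, 1], ![1, 0, 0, 0]),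
   (-![0, 0, 0, 0, 0, 0, 0, 0, 0, 0, 1, 0], ![0, 1, 0, 0]),
   (-![0, 0, 0, 0, 0, 0, 0, 0, 1, 0, 0, 0], ![0, 0, 1, 0]),
   (-![0, 0, 0, 1, 0, 0, 0, 0, 0, 0, 0, 0], ![0, 0, 0, 1]),
   (-![0, 0, 0, 0, 0, 0, 1, 0, 0, 0, 1, 1], ![1, 1, 0, 0]),
   (-![0, 0, 0, 0, 0, 0, 1, 1, 1, 1, 0, 1], ![1, 1, 1, 0]),
   (-![0, 0, 0, 0, 0, 0, 1, 0, 1, 1, 1, 1], ![1, 1, 1, 0]),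
   (-![0, 0, 0, 0, 0, 0, 0, 0, 1, 1, 1, 0], ![0, 1, 1, 0]),
   (-![0, 0, 0, 1, 1, 1, 1, 0, 0, 0, 0, 1], ![1, 1, 0, 1]),
   (-![0, 0, 0, 1, 1, 0, 1, 0, 0, 0, 1, 1], ![1, 1, 0, 1]),
   (-![0, 0, 0, 1, 1, 0, 0, 0, 0, 0, 1, 0], ![0, 1, 0, 1]),
   (-![0, 1, 0, 1, 1, 0, 0, 0, 1, 1, 0, 0], ![0, 1, 1, 1]),
   (-![0, 0, 0, 1, 1, 0, 0, 0, 1, 1, 1, 0], ![0, 1, 1, 1]),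
   (-![0, 0, 1, 1, 1, 1, 1, 0, 1, 0, 0, 1], ![1, 1, 1, 1]),
   (-![0, 1, 1, 1, 1, 0, 1, 0, 1, 0, 0, 1], ![1, 1, 1, 1]),
   (-![0, 1, 1, 1, 0, 0, 1, 1, 1, 0, 0, 1], ![1, 1, 1, 1]),
   (-![0, 1, 0, 1, 0, 0, 1, 1, 1, 1, 0, 1], ![1, 1, 1, 1]),
   (-![0, 0, 0, 1, 1, 0, 1, 0, 1, 1, 1, 1], ![1, 1, 1, 1]),
   (-![0, 1, 0, 1, 1, 0, 1, 0, 1, 1, 0, 1], ![1, 1, 1, 1]),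
   (-![1, 0, 1, 1, 1, 1, 1, 1, 1, 0, 1, 0], ![1, 2, 1, 1]),
   (-![1, 1, 1, 1, 1, 0, 1, 1, 1, 0, 1, 0], ![1, 2, 1, 1]),
   (-![0, 0, 1, 1, 1, 1, 1, 1, 1, 0, 1, 1], ![1, 2, 1, 1]),
   (-![0, 1, 1, 1, 1, 0, 1, 1, 1, 0, 1, 1], ![1, 2, 1, 1]),
   (-![1, 1, 0, 1, 1, 0, 1, 1, 1, 1, 1, 0], ![1, 2, 1, 1]),
   (-![0, 1, 0, 1, 1, 0, 1, 1, 1, 1, 1, 1], ![1, 2, 1, 1]),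
   (-![1, 0, 0, 1, 1, 1, 1, 1, 1, 1, 1, 0], ![1, 2, 1, 1]),
   (-![0, 0, 0, 1, 1, 1, 1, 1, 1, 1, 1, 1], ![1, 2, 1, 1]),
   (-![0, 1, 1, 1, 1, 0, 1, 1, 2, 1, 1, 1], ![1, 2, 2, 1]),
   (-![0, 0, 1, 1, 1, 1, 1, 1, 2, 1, 1, 1], ![1, 2, 2, 1]),
   (-![1, 1, 1, 1, 1, 0, 1, 1, 2, 1, 1, 0], ![1, 2, 2, 1]),
   (-![1, 0, 1, 1, 1, 1, 1, 1, 2, 1, 1, 0], ![1, 2, 2, 1]),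
   (-![0, 1, 0, 1, 1, 0, 1, 1, 2, 2, 1, 1], ![1, 2, 2, 1]),
   (-![0, 1, 1, 2, 1, 1, 1, 1, 1, 0, 1, 1], ![1, 2, 1, 2]),
   (-![0, 1, 0, 2, 1, 1, 1, 1, 1, 1, 1, 1], ![1, 2, 1, 2]),
   (-![1, 1, 1, 2, 1, 1, 1, 1, 1, 0, 1, 0], ![1, 2, 1, 2]),
   (-![1, 1, 0, 2, 1, 1, 1, 1, 1, 1, 1, 0], ![1, 2, 1, 2]),
   (-![0, 1, 1, 2, 2, 1, 1, 0, 1, 0, 1, 1], ![1, 2, 1, 2]),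
   (-![0, 1, 0, 2, 2, 1, 1, 0, 1, 1, 1, 1], ![1, 2, 1, 2]),
   (-![0, 0, 1, 1, 1, 1, 2, 1, 1, 0, 1, 2], ![2, 2, 1, 1]),
   (-![0, 0, 0, 1, 1, 1, 2, 1, 1, 1, 1, 2], ![2, 2, 1, 1]),
   (-![0, 1, 1, 1, 1, 0, 2, 1, 1, 0, 1, 2], ![2, 2, 1, 1]),
   (-![0, 1, 0, 1, 1, 0, 2, 1, 1, 1, 1, 2], ![2, 2, 1, 1]),
   (-![1, 1, 1, 2, 1, 1, 1, 1, 2, 1, 1, 0], ![1, 2, 2, 2]),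
   (-![0, 1, 1, 2, 1, 1, 1, 1, 2, 1, 1, 1], ![1, 2, 2, 2]),
   (-![0, 1, 1, 2, 2, 1, 1, 0, 2, 1, 1, 1], ![1, 2, 2, 2]),
   (-![0, 1, 1, 2, 1, 1, 2, 1, 1, 0, 1, 2], ![2, 2, 1, 2]),
   (-![0, 1, 0, 2, 1, 1, 2, 1, 1, 1, 1, 2], ![2, 2, 1, 2]),
   (-![0, 1, 1, 2, 2, 1, 2, 0, 1, 0, 1, 2], ![2, 2, 1, 2]),
   (-![0, 1, 0, 2, 2, 1, 2, 0, 1, 1, 1, 2], ![2, 2, 1, 2]),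
   (-![0, 1, 1, 1, 1, 0, 2, 1, 2, 1, 1, 2], ![2, 2, 2, 1]),
   (-![0, 0, 1, 1, 1, 1, 2, 1, 2, 1, 1, 2], ![2, 2, 2, 1]),
   (-![0, 1, 0, 1, 1, 0, 2, 1, 2, 2, 1, 2], ![2, 2, 2, 1]),
   (-![0, 1, 1, 2, 1, 1, 2, 1, 2, 1, 1, 2], ![2, 2, 2, 2]),
   (-![0, 1, 1, 2, 2, 1, 2, 0, 2, 1, 1, 2], ![2, 2, 2, 2]),
   (-![0, 1, 1, 2, 2, 1, 1, 1, 1, 0, 2, 1], ![1, 3, 1, 2]),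
   (-![0, 1, 0, 2, 2, 1, 1, 1, 1, 1, 2, 1], ![1, 3, 1, 2]),
   (-![1, 1, 1, 2, 2, 1, 1, 1, 1, 0, 2, 0], ![1, 3, 1, 2]),
   (-![1, 1, 0, 2, 2, 1, 1, 1, 1, 1, 2, 0], ![1, 3, 1, 2]),
   (-![1, 1, 0, 2, 2, 1, 1, 1, 2, 2, 2, 0], ![1, 3, 2, 2]),
   (-![0, 1, 0, 2, 2, 1, 1, 1, 2, 2, 2, 1], ![1, 3, 2, 2]),
   (-![1, 1, 0, 2, 2, 1, 2, 1, 1, 1, 2, 1], ![2, 3, 1, 2]),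
   (-![1, 1, 1, 2, 2, 1, 2, 1, 1, 0, 2, 1], ![2, 3, 1, 2]),
   (-![1, 1, 0, 2, 2, 1, 2, 1, 2, 2, 2, 1], ![2, 3, 2, 2]),
   (-![0, 1, 1, 2, 2, 1, 1, 1, 3, 2, 2, 1], ![1, 3, 3, 2]),
   (-![1, 1, 1, 2, 2, 1, 1, 1, 3, 2, 2, 0], ![1, 3, 3, 2]),
   (-![0, 1, 1, 2, 2, 1, 3, 1, 1, 0, 2, 3], ![3, 3, 1, 2]),
   (-![0, 1, 0, 2, 2, 1, 3, 1, 1, 1, 2, 3], ![3, 3, 1, 2]),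
   (-![0, 1, 1, 2, 2, 1, 3, 1, 3, 2, 2, 3], ![3, 3, 3, 2]),
   (-![1, 1, 1, 2, 2, 1, 2, 1, 3, 2, 2, 1], ![2, 3, 3, 2]),
   (-![0, 1, 0, 2, 2, 1, 3, 1, 2, 2, 2, 3], ![3, 3, 2, 2])]

/-- The linear part of the coordinate change `x ↦ coordMatrix *ᵥ x + paramMatrix *ᵥ k` from the
coordinates at the end of `sigmaChain` to those of `SigmaSet k`. -/
def coordMatrix : Matrix (Fin 12) (Fin 12) ℤ :=
  !![-1, 0, 0, 0, 0, 0, 1, -1, 1, 1, 0, 0;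
     2, 0, -2, 0, -1, 1, -1, 1, 0, -2, 1, 0;
     0, 0, 0, 0, 0, 0, 0, 0, -1, 1, -1, 1;
     0, 0, 0, 0, 0, 0, 1, -1, 0, 1, -1, 0;
     -3, -1, 1, 1, 1, -1, 0, 0, 0, 1, 0, 0;
     1, 0, 0, 0, 1, 0, -2, 1, 0, -1, 1, 0;
     1, 1, 0, 0, -1, 0, 0, 0, 0, 0, 1, -1;
     0, 0, 1, 0, 0, -1, 0, 0, 0, 0, 0, 0;
     0, 0, 0, 0, 0, 0, 0, 1, 0, -1, 0, 0;
     -1, 0, 1, 0, 1, 0, 0, -1, 0, 1, 0, 0;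
     2, 0, -1, -1, -1, 1, 0, 0, 0, -1, 0, 0;
     0, 0, 0, 0, 0, 0, 0, 0, 0, 0, -1, 1]

/-- The inverse of `coordMatrix`, which certifies that it is unimodular. -/
def coordMatrixInv : Matrix (Fin 12) (Fin 12) ℤ :=
  !![1, 1, 1, 2, 1, 1, 1, 1, 2, 1, 1, 0;
     -1, -1, -1, -2, -2, -1, -1, -1, -2, -1, -2, 0;
     1, 1, 1, 2, 2, 1, 2, 1, 3, 2, 2, 1;
     1, 2, 1, 3, 2, 1, 2, 1, 3, 2, 1, 1;
     0, 0, 0, 0, -1, 0, -1, 0, 0, 0, -1, -1;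
     1, 1, 1, 2, 2, 1, 2, 0, 3, 2, 2, 1;
     1, 1, 1, 1, 0, 0, 0, 1, 2, 1, 0, -1;
     1, 0, 1, 1, 1, 1, 1, 0, 2, 0, 1, 0;
     1, 0, 0, 1, 1, 1, 1, 0, 1, 0, 1, 1;
     1, 0, 1, 1, 1, 1, 1, 0, 1, 0, 1, 0;
     1, 1, 1, 0, 0, 0, 0, 1, 1, 1, 0, -1;
     1, 1, 1, 0, 0, 0, 0, 1, 1, 1, 0, 0]

/-- The translation part of the coordinate change from the end of `sigmaChain` to `SigmaSet k`. -/
def paramMatrix : Matrix (Fin 12) (Fin 4) ℤ :=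
  !![1, 0, 1, 0;
     0, 2, 0, 1;
     0, 0, 0, 0;
     0, 0, 1, 0;
     0, 0, 0, 0;
     0, 0, -1, 1;
     0, 0, 0, 0;
     0, 0, 0, 0;
     0, 0, 0, 0;
     0, -1, 0, 0;
     0, 1, 0, 0;
     1, 0, 0, 0]

end Forms

open GelfandTsetlin ParamForm

/-- The weight of `D 4` whose Gelfand–Tsetlin patterns are counted, shifted by
`(k 0 + k 3) / 2`. It is the image of `k` under the triality that swaps `k 0` and `k 2`. -/
def topRow (k : Fin 4 → ℤ) : Fin 4 → ℤ := ![-k 0, 0, k 1, k 1 + k 2]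

lemma isDominantD_topRow {k : Fin 4 → ℤ} (hk : ∀ i, 0 ≤ k i) :
    IsDominantD (k 0 + k 3) (topRow k) := by
  have h₀ := hk 0
  have h₁ := hk 1
  have h₂ := hk 2
  have h₃ := hk 3
  simp only [IsDominantD, topRow, lowerD, sup_le_iff, Fin.forall_fin_succ, IsEmpty.forall_iff,
    Fin.succ_zero_eq_one, Fin.castSucc_zero, Fin.reduceSucc, Fin.reduceCastSucc,
    Fin.succ_one_eq_two, Fin.castSucc_one, Matrix.cons_val]
  and_intros <;> lia

/-- The Gelfand–Tsetlin pattern with the given entries, read row by row from top to bottom. -/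
def toPattern (x : Fin 12 → ℤ) : Pattern 3 :=
  .cons ![x 0, x 1, x 2] ![x 3, x 4, x 5] <| .cons ![x 6, x 7] ![x 8, x 9] <|
    .cons ![x 10] ![x 11] .nil

lemma bijective_toPattern : Function.Bijective toPattern := by
  refine Function.bijective_iff_has_inverse.2
    ⟨fun ⟨m, n, a, b, c, d, _⟩ ↦ ![m 0, m 1, m 2, n 0, n 1, n 2, a 0, a 1, b 0, b 1, c 0, d 0],
      fun x ↦ ?_, fun ⟨m, n, a, b, c, d, _⟩ ↦ ?_⟩
  · ext i; fin_cases i <;> rfl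
  · simp only [toPattern, Pattern.cons]
    congr <;> ext i <;> fin_cases i <;> rfl

lemma toPattern_mem_patterns (k : Fin 4 → ℤ) (x : Fin 12 → ℤ) :
    toPattern x ∈ patterns (k 0 + k 3) 3 (topRow k) ↔ x ∈ polytope gtForms k := by
  rw [toPattern, topRow, mem_patterns_succ, mem_patterns_succ, mem_patterns_succ]
  simp only [nil_mem_patterns, restrictD, restrictB, lowerD, lowerB, Fintype.mem_piFinset, mem_Icc,
    sup_le_iff, Fin.forall_fin_succ, IsEmpty.forall_iff, Fin.cases_zero, Fin.cases_succ,
    Fin.succ_zero_eq_one, Fin.castSucc_zero, Fin.reduceSucc, Fin.reduceCastSucc,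
    Fin.succ_one_eq_two, Fin.castSucc_one, Matrix.cons_val]
  simp only [polytope, gtForms, Set.mem_ofPred_eq, List.forall_mem_cons, eval, add_dotProduct,
    sub_dotProduct, neg_dotProduct, single_one_dotProduct, zero_dotProduct, List.not_mem_nil,
    IsEmpty.forall_iff, implies_true]
  simp only [dotProduct, Fin.sum_univ_ofNat, Matrix.cons_val, zero_mul, one_mul, zero_add, add_zero]
  constructor <;> intro h <;> and_intros <;> lia

lemma sigmaSet_eq_polytope (k : Fin 4 → ℤ) : SigmaSet k = polytope sigmaForms k := by
  ext p
  simp only [SigmaSet, SatisfiesIneqs, polytope, sigmaForms, Set.mem_ofPred_eq,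
    List.forall_mem_append, List.forall_mem_map, List.forall_mem_cons, List.mem_finRange,
    List.not_mem_nil, IsEmpty.forall_iff, implies_true, forall_const, eval, single_one_dotProduct,
    zero_dotProduct, neg_dotProduct, le_neg_add_iff_add_le, add_zero, and_true]
  simp only [dotProduct, Fin.sum_univ_ofNat, Matrix.cons_val, zero_mul, one_mul, zero_add, add_zero]

lemma mutatesTo_gtForms :
    MutatesTo sigmaChain gtForms (sigmaForms.map (substitute coordMatrix paramMatrix)) := by
  decide +kernel

lemma coordMatrixInv_mul_coordMatrix : coordMatrixInv * coordMatrix = 1 := by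
  decide +kernel

lemma polytope_gtForms (k : Fin 4 → ℤ) :
    polytope gtForms k = toPattern ⁻¹' patterns (k 0 + k 3) 3 (topRow k) :=
  Set.ext fun x ↦ (toPattern_mem_patterns k x).symm

theorem encard_sigmaSet (k : Fin 4 → ℤ) :
    (SigmaSet k).encard = (patterns (k 0 + k 3) 3 (topRow k)).card := by
  rw [sigmaSet_eq_polytope,
    ← encard_polytope_map_substitute coordMatrixInv_mul_coordMatrix paramMatrix,
    ← mutatesTo_gtForms.encard_eq, polytope_gtForms,
    Set.encard_preimage_of_bijective bijective_toPattern, Set.encard_coe_eq_coe_finsetCard]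

lemma prod_Ioi_fin_four {M : Type*} [CommMonoid M] (f : Fin 4 → Fin 4 → M) :
    ∏ i, ∏ j ∈ Ioi i, f i j = f 0 1 * f 0 2 * f 0 3 * (f 1 2 * f 1 3) * f 2 3 := by
  have h₀ : Ioi (0 : Fin 4) = {1, 2, 3} := rfl
  have h₁ : Ioi (1 : Fin 4) = {2, 3} := rfl
  have h₂ : Ioi (2 : Fin 4) = {3} := rfl
  have h₃ : Ioi (3 : Fin 4) = ∅ := rfl
  simp [Fin.prod_univ_four, h₀, h₁, h₂, h₃, mul_assoc]

-- Triality permutes the twelve factors `x ± y`, …, `z ± w`.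
lemma prod_sq_sub_sq_triality {K : Type*} [Field K] [NeZero (2 : K)] {u : Fin 4 → K} {x y z w : K}
    (h₀ : u 0 = (-x + y + z + w) / 2) (h₁ : u 1 = (x - y + z + w) / 2)
    (h₂ : u 2 = (x + y - z + w) / 2) (h₃ : u 3 = (x + y + z - w) / 2) :
    ∏ i, ∏ j ∈ Ioi i, (u j ^ 2 - u i ^ 2) =
      (x ^ 2 - y ^ 2) * (x ^ 2 - z ^ 2) * (x ^ 2 - w ^ 2) * (y ^ 2 - z ^ 2) * (y ^ 2 - w ^ 2) *
        (z ^ 2 - w ^ 2) := by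
  have h_two : (2 : K) ≠ 0 := NeZero.ne 2
  have h₀₁ : u 1 ^ 2 - u 0 ^ 2 = (z + w) * (x - y) := by rw [h₀, h₁]; field_simp; ring
  have h₀₂ : u 2 ^ 2 - u 0 ^ 2 = (y + w) * (x - z) := by rw [h₀, h₂]; field_simp; ring
  have h₀₃ : u 3 ^ 2 - u 0 ^ 2 = (y + z) * (x - w) := by rw [h₀, h₃]; field_simp; ring
  have h₁₂ : u 2 ^ 2 - u 1 ^ 2 = (x + w) * (y - z) := by rw [h₁, h₂]; field_simp; ring
  have h₁₃ : u 3 ^ 2 - u 1 ^ 2 = (x + z) * (y - w) := by rw [h₁, h₃]; field_simp; ring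
  have h₂₃ : u 3 ^ 2 - u 2 ^ 2 = (x + y) * (z - w) := by rw [h₂, h₃]; field_simp; ring
  rw [prod_Ioi_fin_four, h₀₁, h₀₂, h₀₃, h₁₂, h₁₃, h₂₃]
  simp only [sq_sub_sq]
  ac_rfl

theorem card_patterns_topRow {k : Fin 4 → ℤ} (hk : ∀ i, 0 ≤ k i) {x y z w : ℚ}
    (hx : x = 2 * k 0 + 2 * k 1 + k 2 + k 3 + 6) (hy : y = 2 * k 1 + k 2 + k 3 + 4)
    (hz : z = k 2 + k 3 + 2) (hw : w = k 3 - k 2) :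
    ((patterns (k 0 + k 3) 3 (topRow k)).card : ℚ) =
      (x ^ 2 - y ^ 2) * (x ^ 2 - z ^ 2) * (x ^ 2 - w ^ 2) * (y ^ 2 - z ^ 2) * (y ^ 2 - w ^ 2) *
        (z ^ 2 - w ^ 2) / 17694720 := by
  rw [card_patterns_eq_prod (isDominantD_topRow hk), prod_sq_sub_sq_triality
    (u := fun i : Fin 4 ↦ ((2 * topRow k i + (k 0 + k 3 + 2 * i) : ℤ) : ℚ)) (x := x) (y := y)
    (z := z) (w := w)]
  · have h_scale : ∏ j : Fin 4, (4 ^ (j : ℕ) * (2 * (j : ℕ)).factorial : ℚ) = 2 ^ 3 * 17694720 := by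
      norm_num [Fin.prod_univ_four, Nat.factorial]
    rw [h_scale, ← mul_div_assoc, mul_div_mul_left _ _ (by norm_num)]
  all_goals
    simp only [topRow, Matrix.cons_val, Fin.coe_ofNat_eq_mod, hx, hy, hz, hw]
    push_cast
    ring

/-- Theorem 2 of the paper: |Σ(k)| equals the Weyl dimension of the irreducible
D4-module with highest weight k1ω1+k2ω2+k3ω3+k4ω4. -/
theorem ncard_sigmaSet_eq_weylDim (k : Fin 4 → ℤ) (hk : ∀ i, 0 ≤ k i) :
    (SigmaSet k).Finite ∧
      ((SigmaSet k).ncard : ℚ) =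
        (let L1 : ℚ := 2 * (k 0 : ℚ) + 2 * (k 1 : ℚ) + (k 2 : ℚ) + (k 3 : ℚ) + 6
         let L2 : ℚ := 2 * (k 1 : ℚ) + (k 2 : ℚ) + (k 3 : ℚ) + 4
         let L3 : ℚ := (k 2 : ℚ) + (k 3 : ℚ) + 2
         let L4 : ℚ := (k 3 : ℚ) - (k 2 : ℚ)
         ((L1 ^ 2 - L2 ^ 2) * (L1 ^ 2 - L3 ^ 2) * (L1 ^ 2 - L4 ^ 2) *
            (L2 ^ 2 - L3 ^ 2) * (L2 ^ 2 - L4 ^ 2) * (L3 ^ 2 - L4 ^ 2)) / 17694720) := by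
  refine ⟨Set.finite_of_encard_eq_coe (encard_sigmaSet k), ?_⟩
  rw [Set.ncard, encard_sigmaSet, ENat.toNat_natCast]
  exact card_patterns_topRow hk rfl rfl rfl rfl
end

section
/- For every k = (k1,k2,k3,k4) ∈ ℤ^4 with nonnegative entries and k ≠ 0, and every p ∈ Σ(k), there exist an index i ∈ {1,2,3,4} with k_i ≥ 1 and a fundamental generator (ε_i, g) such that g ≤ p componentwise and p − g ∈ Σ(k − ε_i). (This is the key reduction step in the proof of Theorem 1 of the paper: every signature in Σ^f(λ) admits a subtraction of an essential signature of some fundamental highest weight ω_i occurring in λ.) -/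
/-- The 52 fundamental generators in (ℤ^4) × (ℤ^12). -/
def gens : Fin 52 → (Fin 4 → ℤ) × (Fin 12 → ℤ) :=
  ![
    (Pi.single 0 1, 0),
    (Pi.single 0 1, Pi.single 11 1),
    (Pi.single 0 1, Pi.single 7 1),
    (Pi.single 0 1, Pi.single 6 1),
    (Pi.single 0 1, Pi.single 5 1),
    (Pi.single 0 1, Pi.single 2 1),
    (Pi.single 0 1, Pi.single 0 1),
    (Pi.single 0 1, Pi.single 0 1 + Pi.single 11 1),
    (Pi.single 1 1, 0),
    (Pi.single 1 1, Pi.single 10 1),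
    (Pi.single 1 1, Pi.single 9 1),
    (Pi.single 1 1, Pi.single 7 1),
    (Pi.single 1 1, Pi.single 6 1),
    (Pi.single 1 1, Pi.single 5 1),
    (Pi.single 1 1, Pi.single 4 1),
    (Pi.single 1 1, Pi.single 2 1),
    (Pi.single 1 1, Pi.single 1 1),
    (Pi.single 1 1, Pi.single 0 1),
    (Pi.single 1 1, Pi.single 7 1 + Pi.single 10 1),
    (Pi.single 1 1, Pi.single 5 1 + Pi.single 10 1),
    (Pi.single 1 1, Pi.single 2 1 + Pi.single 10 1),
    (Pi.single 1 1, Pi.single 1 1 + Pi.single 10 1),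
    (Pi.single 1 1, Pi.single 0 1 + Pi.single 10 1),
    (Pi.single 1 1, Pi.single 5 1 + Pi.single 9 1),
    (Pi.single 1 1, Pi.single 2 1 + Pi.single 9 1),
    (Pi.single 1 1, Pi.single 0 1 + Pi.single 9 1),
    (Pi.single 1 1, Pi.single 5 1 + Pi.single 7 1),
    (Pi.single 1 1, Pi.single 4 1 + Pi.single 7 1),
    (Pi.single 1 1, Pi.single 0 1 + Pi.single 7 1),
    (Pi.single 1 1, Pi.single 0 1 + Pi.single 6 1),
    (Pi.single 1 1, Pi.single 1 1 + Pi.single 5 1),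
    (Pi.single 1 1, Pi.single 0 1 + Pi.single 5 1),
    (Pi.single 1 1, Pi.single 0 1 + Pi.single 4 1),
    (Pi.single 1 1, Pi.single 0 1 + Pi.single 2 1),
    (Pi.single 1 1, Pi.single 0 1 + Pi.single 1 1),
    (Pi.single 1 1, Pi.single 0 2),
    (Pi.single 2 1, 0),
    (Pi.single 2 1, Pi.single 9 1),
    (Pi.single 2 1, Pi.single 8 1),
    (Pi.single 2 1, Pi.single 7 1),
    (Pi.single 2 1, Pi.single 2 1),
    (Pi.single 2 1, Pi.single 1 1),
    (Pi.single 2 1, Pi.single 0 1),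
    (Pi.single 2 1, Pi.single 2 1 + Pi.single 9 1),
    (Pi.single 3 1, 0),
    (Pi.single 3 1, Pi.single 5 1),
    (Pi.single 3 1, Pi.single 4 1),
    (Pi.single 3 1, Pi.single 3 1),
    (Pi.single 3 1, Pi.single 2 1),
    (Pi.single 3 1, Pi.single 1 1),
    (Pi.single 3 1, Pi.single 0 1),
    (Pi.single 3 1, Pi.single 1 1 + Pi.single 5 1)]

/-!
Order the 52 fundamental generators. When a generator `x` is removed from the list, the cone spanned
by the remaining ones is cut out of the previous cone by a few new facet inequalities `a ≤ b`, and
the order is chosen so that each of them is violated by `x` by exactly `1`. Hence, if a lattice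
point violates one of them, so that `b + 1 ≤ a`, then adding suitable multiples of this to the
inequalities already known for the point shows that subtracting `x` does not lead out of Σ. A point
of Σ from which no generator can be subtracted therefore satisfies all the new inequalities one
after another; when no generator is left, the cone is `{0}`.
-/

local notation "𝐞" j:max => (Pi.single j 1 : Fin 12 → ℤ)

/-- The lattice points over `k` of the cone spanned by all generators but `(ε₀, 𝐞 11)`, `(ε₁, 𝐞 6)`
and `(ε₁, 𝐞 0 + 𝐞 6)` (indices start at `0` as in `gens`). -/
def Subcone₁ (k : Fin 4 → ℤ) : Set (Fin 12 → ℤ) :=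
  {p | (∀ j, 0 ≤ p j) ∧
    p 10 ≤ k 1 ∧
    p 8 ≤ k 2 ∧
    p 3 ≤ k 3 ∧
    p 11 ≤ p 0 ∧
    p 6 + p 11 ≤ k 0 ∧
    p 8 + p 9 + p 10 ≤ k 1 + k 2 ∧
    p 3 + p 4 + p 10 ≤ k 1 + k 3 ∧
    p 6 + p 7 + p 8 + p 9 + p 11 ≤ k 0 + k 1 + k 2 ∧
    p 3 + p 4 + p 5 + p 6 + p 11 ≤ k 0 + k 1 + k 3 ∧
    p 3 + p 4 + p 8 + p 9 + p 10 ≤ k 1 + k 2 + k 3 ∧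
    p 1 + p 3 + p 4 + p 8 + p 9 ≤ k 1 + k 2 + k 3 ∧
    p 2 + p 3 + p 4 + p 5 + p 6 + p 8 + p 11 ≤ k 0 + k 1 + k 2 + k 3 ∧
    p 1 + p 3 + p 6 + p 7 + p 8 + p 9 + p 11 ≤ k 0 + k 1 + k 2 + k 3 ∧
    p 1 + p 2 + p 3 + p 6 + p 7 + p 8 + p 11 ≤ k 0 + k 1 + k 2 + k 3 ∧
    p 1 + p 2 + p 3 + p 4 + p 6 + p 8 + p 11 ≤ k 0 + k 1 + k 2 + k 3 ∧
    p 0 + p 3 + p 4 + p 5 + p 6 + p 7 + p 8 + p 9 + p 10 ≤ k 0 + 2 * k 1 + k 2 + k 3 ∧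
    p 0 + p 2 + p 3 + p 4 + p 5 + p 6 + p 7 + p 8 + p 10 ≤ k 0 + 2 * k 1 + k 2 + k 3 ∧
    p 0 + p 1 + p 3 + p 4 + p 6 + p 7 + p 8 + p 9 + p 10 ≤ k 0 + 2 * k 1 + k 2 + k 3 ∧
    p 0 + p 1 + p 2 + p 3 + p 4 + p 6 + p 7 + p 8 + p 10 ≤ k 0 + 2 * k 1 + k 2 + k 3 ∧
    p 1 + p 3 + p 4 + p 6 + p 7 + 2 * p 8 + 2 * p 9 + p 10 + p 11 ≤ k 0 + 2 * k 1 + 2 * k 2 + k 3 ∧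
    p 0 + p 2 + p 3 + p 4 + p 5 + p 6 + p 7 + 2 * p 8 + p 9 + p 10 ≤ k 0 + 2 * k 1 + 2 * k 2 + k 3 ∧
    p 0 + p 1 + p 2 + p 3 + p 4 + p 6 + p 7 + 2 * p 8 + p 9 + p 10 ≤ k 0 + 2 * k 1 + 2 * k 2 + k 3 ∧
    p 1 + 2 * p 3 + 2 * p 4 + p 5 + p 6 + p 8 + p 9 + p 10 + p 11 ≤ k 0 + 2 * k 1 + k 2 + 2 * k 3 ∧
    p 1 + p 2 + 2 * p 3 + 2 * p 4 + p 5 + p 6 + p 8 + p 10 + p 11 ≤ k 0 + 2 * k 1 + k 2 + 2 * k 3 ∧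
    p 0 + p 1 + 2 * p 3 + p 4 + p 5 + p 6 + p 7 + p 8 + p 9 + p 10 ≤ k 0 + 2 * k 1 + k 2 + 2 * k 3 ∧
    p 0 + p 1 + p 2 + 2 * p 3 + p 4 + p 5 + p 6 + p 7 + p 8 + p 10 ≤ k 0 + 2 * k 1 + k 2 + 2 * k 3 ∧
    p 0 + p 1 + 2 * p 3 + 2 * p 4 + p 5 + p 6 + p 7 + p 8 + p 9 + 2 * p 10 ≤
      k 0 + 3 * k 1 + k 2 + 2 * k 3 ∧
    p 0 + p 1 + p 2 + 2 * p 3 + 2 * p 4 + p 5 + p 6 + p 7 + p 8 + 2 * p 10 ≤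
      k 0 + 3 * k 1 + k 2 + 2 * k 3 ∧
    p 1 + p 2 + 2 * p 3 + 2 * p 4 + p 5 + p 6 + 2 * p 8 + p 9 + p 10 + p 11 ≤
      k 0 + 2 * k 1 + 2 * k 2 + 2 * k 3 ∧
    p 0 + p 1 + p 2 + 2 * p 3 + p 4 + p 5 + p 6 + p 7 + 2 * p 8 + p 9 + p 10 ≤
      k 0 + 2 * k 1 + 2 * k 2 + 2 * k 3 ∧
    p 0 + p 1 + 2 * p 3 + 2 * p 4 + p 5 + p 6 + p 7 + 2 * p 8 + 2 * p 9 + 2 * p 10 ≤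
      k 0 + 3 * k 1 + 2 * k 2 + 2 * k 3 ∧
    p 0 + p 1 + p 2 + 2 * p 3 + 2 * p 4 + p 5 + p 6 + p 7 + 3 * p 8 + 2 * p 9 + 2 * p 10 ≤
      k 0 + 3 * k 1 + 3 * k 2 + 2 * k 3}

/-- The lattice points over `k` of the cone spanned by the generators of `Subcone₁` in which `p 3`,
`p 4`, `p 6`, `p 8` and `p 11` vanish, other than `(ε₂, 𝐞 9)`, `(ε₂, 𝐞 2 + 𝐞 9)`, `(ε₃, 𝐞 1)` and
`(ε₃, 𝐞 1 + 𝐞 5)`. -/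
def Subcone₂ (k : Fin 4 → ℤ) : Set (Fin 12 → ℤ) :=
  {p | (∀ i, 0 ≤ k i) ∧ (∀ j, 0 ≤ p j) ∧
    p 3 = 0 ∧ p 4 = 0 ∧ p 6 = 0 ∧ p 8 = 0 ∧ p 11 = 0 ∧
    p 9 + p 10 ≤ k 1 ∧
    p 1 + p 9 ≤ k 1 + k 2 ∧
    p 5 ≤ k 0 + k 1 + k 3 ∧
    p 1 + p 7 + p 9 ≤ k 0 + k 1 + k 2 ∧
    p 2 + p 5 ≤ k 0 + k 1 + k 2 + k 3 ∧
    p 1 + p 2 + p 7 ≤ k 0 + k 1 + k 2 + k 3 ∧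
    p 0 + p 1 + p 2 + p 5 + p 7 + p 9 + p 10 ≤ k 0 + 2 * k 1 + k 2 + k 3}

/-- The cone spanned by the generators of `Subcone₂` in which `k 2` and `p 1` vanish, other than
`(ε₀, 𝐞 7)`, `(ε₁, 𝐞 5 + 𝐞 7)` and `(ε₁, 𝐞 7 + 𝐞 10)`. -/
def Subcone₃ (k : Fin 4 → ℤ) : Set (Fin 12 → ℤ) :=
  {p ∈ Subcone₂ k | k 2 = 0 ∧ p 1 = 0 ∧
    p 7 + p 9 + p 10 ≤ k 1 ∧ p 2 + p 5 + p 7 ≤ k 0 + k 1 + k 3}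

/-- The cone spanned by the generators of `Subcone₃` in which `k 3`, `p 7` and `p 9` vanish. -/
def Subcone₄ (k : Fin 4 → ℤ) : Set (Fin 12 → ℤ) :=
  {p ∈ Subcone₃ k | k 3 = 0 ∧ p 7 = 0 ∧ p 9 = 0}

/-- The cone spanned by the generators of `Subcone₄` in which `p 2` and `p 5` vanish. -/
def Subcone₅ (k : Fin 4 → ℤ) : Set (Fin 12 → ℤ) :=
  {p ∈ Subcone₄ k | p 2 = 0 ∧ p 5 = 0}

theorem subcone₁_subset_sigmaSet (k : Fin 4 → ℤ) : Subcone₁ k ⊆ SigmaSet k := by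
  intro p hp
  simp only [Subcone₁, SigmaSet, SatisfiesIneqs, Set.mem_ofPred_eq,
    Fin.forall_fin_succ, Fin.isValue, Fin.succ_zero_eq_one, Fin.succ_one_eq_two, Fin.reduceSucc,
    IsEmpty.forall_iff, and_true] at hp ⊢
  simp only [hp, true_and, and_true]
  casesm* _ ∧ _
  and_intros <;> linarith

theorem subcone₂_subset_subcone₁ (k : Fin 4 → ℤ) : Subcone₂ k ⊆ Subcone₁ k := by
  intro p hp
  simp only [Subcone₁, Subcone₂, Set.mem_ofPred_eq,
    Fin.forall_fin_succ, Fin.isValue, Fin.succ_zero_eq_one, Fin.succ_one_eq_two, Fin.reduceSucc,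
    IsEmpty.forall_iff, and_true] at hp ⊢
  casesm* _ ∧ _
  and_intros <;> linarith

theorem nonneg_of_mem_sigmaSet {k : Fin 4 → ℤ} {p : Fin 12 → ℤ} (hp : p ∈ SigmaSet k) (i : Fin 4) :
    0 ≤ k i := by
  obtain ⟨hp, h₀, h₁, h₂, h₃, -⟩ := hp
  fin_cases i
  exacts [(hp 11).trans h₀, (hp 10).trans h₁, (hp 8).trans h₂, (hp 3).trans h₃]

/-- `(k, p)` is a point of the cone `C` from which no fundamental generator can be subtracted
within `C`. -/
structure IsMinimalIn (C : (Fin 4 → ℤ) → Set (Fin 12 → ℤ)) (k : Fin 4 → ℤ) (p : Fin 12 → ℤ) :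
    Prop where
  mem : p ∈ C k
  sub_notMem : ∀ t, p - (gens t).2 ∉ C (k - (gens t).1)

namespace IsMinimalIn

variable {C D : (Fin 4 → ℤ) → Set (Fin 12 → ℤ)} {k : Fin 4 → ℤ} {p : Fin 12 → ℤ}

theorem mono (h : IsMinimalIn C k p) (hDC : ∀ k, D k ⊆ C k) (hp : p ∈ D k) : IsMinimalIn D k p :=
  ⟨hp, fun t ht => h.sub_notMem t (hDC _ ht)⟩

theorem le_of_sub_mem (h : IsMinimalIn C k p) (i : Fin 4) (g : Fin 12 → ℤ) {a b : ℤ}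
    (hsub : p ∈ C k → b < a → p - g ∈ C (k - Pi.single i 1) := by
      intro hp hlt
      simp only [SigmaSet, SatisfiesIneqs, Subcone₁, Subcone₂, Subcone₃, Subcone₄, Subcone₅,
        Set.mem_ofPred_eq, Fin.forall_fin_succ, Fin.isValue, Fin.succ_zero_eq_one,
        Fin.succ_one_eq_two, Fin.reduceSucc, IsEmpty.forall_iff, and_true] at hp ⊢
      simp only [Pi.sub_apply, Pi.add_apply, Pi.zero_apply, Pi.single_apply, Fin.reduceEq,
        reduceIte, sub_zero, zero_add, add_zero, sub_add_eq_add_sub, ← add_sub_assoc, mul_sub,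
        sub_le_sub_iff_right, hp, true_and, and_true]
      casesm* _ ∧ _
      -- Only the inequalities that lose slack when `g` is subtracted need `hlt`.
      and_intros <;> linarith)
    (hg : ∃ t, gens t = (Pi.single i 1, g) := by decide) : a ≤ b := by
  obtain ⟨t, ht⟩ := hg
  by_contra! hab
  exact h.sub_notMem t (by simpa only [ht] using hsub h.mem hab)

set_option maxHeartbeats 1000000 in
-- each subtraction is checked against the 82 inequalities of `SigmaSet`
theorem subcone₁ (h : IsMinimalIn SigmaSet k p) : IsMinimalIn Subcone₁ k p := by
  have : p 6 + p 11 ≤ k 0 + p 0 := h.le_of_sub_mem 1 (𝐞 6)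
  have h₆ : p 6 + p 11 ≤ k 0 := h.le_of_sub_mem 1 (𝐞 0 + 𝐞 6)
  have h₁₁ : p 11 ≤ p 0 := h.le_of_sub_mem 0 (𝐞 11)
  refine h.mono subcone₁_subset_sigmaSet ?_
  have hp := h.mem
  simp only [SigmaSet, SatisfiesIneqs, Set.mem_ofPred_eq] at hp
  simp only [Subcone₁, Set.mem_ofPred_eq, hp, h₆, h₁₁, implies_true, and_true]

set_option maxHeartbeats 1000000 in
-- 16 subtractions are checked against the 44 inequalities of `Subcone₁`
theorem subcone₂ (h : IsMinimalIn Subcone₁ k p) : IsMinimalIn Subcone₂ k p := by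
  have : p 4 + p 8 + p 9 + p 10 ≤ k 1 + k 2 := h.le_of_sub_mem 3 (𝐞 4)
  have : p 4 + p 10 ≤ k 1 := h.le_of_sub_mem 3 (𝐞 4)
  have : p 4 + p 11 ≤ p 0 + p 7 := h.le_of_sub_mem 1 (𝐞 4)
  have : p 0 + p 1 + p 2 + 2 * p 3 + p 4 + p 5 + p 6 + p 7 + p 8 + p 9 + p 10 ≤
      k 0 + 2 * k 1 + k 2 + 2 * k 3 := h.le_of_sub_mem 2 (𝐞 2 + 𝐞 9)
  have : p 0 + p 2 + p 3 + p 4 + p 5 + p 6 + p 7 + p 8 + p 9 + p 10 ≤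
      k 0 + 2 * k 1 + k 2 + k 3 := h.le_of_sub_mem 2 (𝐞 2 + 𝐞 9)
  have : p 0 + p 1 + p 2 + p 3 + p 4 + p 6 + p 7 + p 8 + p 9 + p 10 ≤
      k 0 + 2 * k 1 + k 2 + k 3 := h.le_of_sub_mem 2 (𝐞 2 + 𝐞 9)
  have : p 11 ≤ 0 := h.le_of_sub_mem 0 (𝐞 0 + 𝐞 11)
  have : p 4 ≤ p 7 := h.le_of_sub_mem 1 (𝐞 0 + 𝐞 4)
  have : p 4 ≤ 0 := h.le_of_sub_mem 1 (𝐞 4 + 𝐞 7)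
  have : p 6 ≤ 0 := h.le_of_sub_mem 0 (𝐞 6)
  have : p 0 + p 1 + p 2 + p 3 + p 5 + p 7 + p 8 + p 9 + p 10 ≤ k 0 + 2 * k 1 + k 2 + k 3 :=
    h.le_of_sub_mem 3 (𝐞 1 + 𝐞 5)
  have : p 9 + p 10 ≤ k 1 := h.le_of_sub_mem 2 (𝐞 9)
  have : p 8 ≤ 0 := h.le_of_sub_mem 2 (𝐞 8)
  have : p 1 + p 7 + p 9 ≤ k 0 + k 1 + k 2 := h.le_of_sub_mem 3 (𝐞 1)
  have : p 1 + p 9 ≤ k 1 + k 2 := h.le_of_sub_mem 3 (𝐞 1)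
  have : p 3 ≤ 0 := h.le_of_sub_mem 3 (𝐞 3)
  refine h.mono subcone₂_subset_subcone₁ ?_
  have hp := h.mem
  simp only [Subcone₁, Subcone₂, Set.mem_ofPred_eq,
    Fin.forall_fin_succ, Fin.isValue, Fin.succ_zero_eq_one, Fin.succ_one_eq_two, Fin.reduceSucc,
    IsEmpty.forall_iff, and_true] at hp ⊢
  casesm* _ ∧ _
  and_intros <;> linarith

theorem subcone₃ (h : IsMinimalIn Subcone₂ k p) : IsMinimalIn Subcone₃ k p := by
  have : p 1 + p 7 + p 9 ≤ k 1 + k 2 := h.le_of_sub_mem 0 (𝐞 7)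
  have : p 2 + p 5 + p 7 ≤ k 0 + k 1 + k 2 + k 3 := h.le_of_sub_mem 1 (𝐞 5 + 𝐞 7)
  have : p 1 + p 2 + p 5 + p 7 ≤ k 0 + k 1 + k 2 + k 3 := h.le_of_sub_mem 1 (𝐞 1 + 𝐞 5)
  have : p 0 + p 5 + p 9 + p 10 ≤ k 0 + 2 * k 1 + k 3 := h.le_of_sub_mem 2 (𝐞 0)
  have : k 2 ≤ p 1 + p 2 + p 7 := h.le_of_sub_mem 2 0
  have : k 2 ≤ p 1 + p 7 := h.le_of_sub_mem 2 (𝐞 2)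
  have : k 2 ≤ p 1 := h.le_of_sub_mem 2 (𝐞 7)
  have : p 1 + p 9 + p 10 ≤ k 1 + k 2 := h.le_of_sub_mem 1 (𝐞 1 + 𝐞 10)
  have : p 1 ≤ k 2 + p 0 := h.le_of_sub_mem 1 (𝐞 1)
  have : p 1 ≤ k 2 := h.le_of_sub_mem 1 (𝐞 0 + 𝐞 1)
  have : p 7 + p 9 + p 10 ≤ k 1 := h.le_of_sub_mem 1 (𝐞 7 + 𝐞 10)
  have : k 2 ≤ 0 := h.le_of_sub_mem 2 (𝐞 1)
  refine h.mono (fun k p hp => hp.1) ⟨h.mem, ?_⟩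
  and_intros <;> linarith [h.mem.1 2]

theorem subcone₄ (h : IsMinimalIn Subcone₃ k p) : IsMinimalIn Subcone₄ k p := by
  have : p 5 + p 7 + p 9 ≤ k 0 + k 1 + k 3 := h.le_of_sub_mem 1 (𝐞 5 + 𝐞 9)
  have : p 2 + p 5 + p 7 + p 9 ≤ k 0 + k 1 + k 3 := h.le_of_sub_mem 1 (𝐞 2 + 𝐞 9)
  have : p 0 + p 2 + p 5 + p 7 + 2 * p 9 + p 10 ≤ k 0 + 2 * k 1 + k 3 :=
    h.le_of_sub_mem 1 (𝐞 0 + 𝐞 9)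
  have : p 7 ≤ p 0 := h.le_of_sub_mem 1 (𝐞 7)
  have : p 9 ≤ 0 := h.le_of_sub_mem 1 (𝐞 9)
  have : p 7 ≤ 0 := h.le_of_sub_mem 1 (𝐞 0 + 𝐞 7)
  have : p 2 ≤ k 0 + k 1 := h.le_of_sub_mem 3 (𝐞 2)
  have : p 2 + p 5 ≤ k 0 + k 1 := h.le_of_sub_mem 3 (𝐞 5)
  have : p 0 + p 2 + p 5 + p 10 ≤ k 0 + 2 * k 1 := h.le_of_sub_mem 3 (𝐞 0)
  have : k 3 ≤ 0 := h.le_of_sub_mem 3 0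
  obtain ⟨hk, hp, -⟩ := h.mem.1
  refine h.mono (fun k p hp => hp.1) ⟨h.mem, ?_⟩
  and_intros <;> linarith [hk 3, hp 7, hp 9]

theorem subcone₅ (h : IsMinimalIn Subcone₄ k p) : IsMinimalIn Subcone₅ k p := by
  have : p 5 + p 10 ≤ k 0 + k 1 := h.le_of_sub_mem 1 (𝐞 5 + 𝐞 10)
  have : p 5 + p 10 ≤ k 1 := h.le_of_sub_mem 0 (𝐞 5)
  have : p 5 ≤ p 0 := h.le_of_sub_mem 1 (𝐞 5)
  have : p 5 ≤ 0 := h.le_of_sub_mem 1 (𝐞 0 + 𝐞 5)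
  have : p 2 ≤ k 1 := h.le_of_sub_mem 0 (𝐞 2)
  have : p 2 + p 10 ≤ k 1 := h.le_of_sub_mem 1 (𝐞 2 + 𝐞 10)
  have : p 0 + 2 * p 2 + p 10 ≤ k 0 + 2 * k 1 := h.le_of_sub_mem 1 (𝐞 0 + 𝐞 2)
  have : p 2 ≤ 0 := h.le_of_sub_mem 1 (𝐞 2)
  obtain ⟨-, hp, -⟩ := h.mem.1.1
  refine h.mono (fun k p hp => hp.1) ⟨h.mem, ?_⟩
  and_intros <;> linarith [hp 2, hp 5]

theorem eq_zero_of_subcone₅ (h : IsMinimalIn Subcone₅ k p) : k = 0 := by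
  have : p 0 + 2 * p 10 ≤ k 0 + 2 * k 1 := h.le_of_sub_mem 1 (𝐞 0 + 𝐞 10)
  have : p 10 ≤ 0 := h.le_of_sub_mem 1 (𝐞 10)
  have : k 1 ≤ p 0 := h.le_of_sub_mem 1 0
  have : p 0 ≤ 2 * k 1 := h.le_of_sub_mem 0 (𝐞 0)
  have : 2 * k 1 ≤ p 0 := h.le_of_sub_mem 1 (𝐞 0)
  have : k 0 ≤ 0 := h.le_of_sub_mem 0 0
  have : k 1 ≤ 0 := h.le_of_sub_mem 1 (Pi.single 0 2)
  obtain ⟨⟨⟨⟨hk, -⟩, hk2, -⟩, hk3, -⟩, -⟩ := h.mem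
  ext i
  fin_cases i
  exacts [(hk 0).antisymm' ‹_›, (hk 1).antisymm' ‹_›, hk2, hk3]

end IsMinimalIn

theorem exists_gens_fst_eq (t : Fin 52) : ∃ i, (gens t).1 = Pi.single i 1 := by
  decide +revert

/-- The key reduction step in the proof of Theorem 1: from every signature in Σ(k) with k ≠ 0
one can subtract a fundamental generator (ε_i, g) with k_i ≥ 1, staying in Σ(k − ε_i). -/
theorem sigmaSet_reduction (k : Fin 4 → ℤ) (hk : ∀ i, 0 ≤ k i) (hk0 : k ≠ 0)
    (p : Fin 12 → ℤ) (hp : p ∈ SigmaSet k) :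
    ∃ i : Fin 4, 1 ≤ k i ∧ ∃ t : Fin 52, (gens t).1 = Pi.single i 1 ∧
      (∀ j, (gens t).2 j ≤ p j) ∧ p - (gens t).2 ∈ SigmaSet (k - Pi.single i 1) := by
  by_contra! hno
  have h : IsMinimalIn SigmaSet k p := by
    refine ⟨hp, fun t ht => ?_⟩
    obtain ⟨i, hi⟩ := exists_gens_fst_eq t
    rw [hi] at ht
    have hki : 1 ≤ k i := by simpa using nonneg_of_mem_sigmaSet ht i
    have hle : ∀ j, (gens t).2 j ≤ p j := fun j => sub_nonneg.mp (ht.1 j)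
    exact hno i hki t hi hle ht
  exact hk0 h.subcone₁.subcone₂.subcone₃.subcone₄.subcone₅.eq_zero_of_subcone₅
end
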